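/- arXiv:math/0612222 — 3 statements merged into one kernel-verified Lean document; each statement's English description precedes it below -/
import Mathlib

section
/- A nontrivial commutator in a free group is not a proper power: if F is a free group, a, b ∈ F, and [a,b] = c^k for some c ∈ F and integer k ≥ 2, then a and b commute (so [a,b] = 1). -/
/-- The integral Heisenberg group. -/
@[ext] structure HeisZ where
  x : ℤ
  y : ℤ
  z : ℤ

namespace HeisZ

instance : Mul HeisZ := ⟨fun u v => ⟨u.x + v.x, u.y + v.y, u.z + v.z + u.x * v.y⟩⟩
instance : One HeisZ := ⟨⟨0, 0, 0⟩⟩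
instance : Inv HeisZ := ⟨fun u => ⟨-u.x, -u.y, -u.z + u.x * u.y⟩⟩

@[simp] theorem mul_x (u v : HeisZ) : (u * v).x = u.x + v.x := rfl
@[simp] theorem mul_y (u v : HeisZ) : (u * v).y = u.y + v.y := rfl
@[simp] theorem mul_z (u v : HeisZ) : (u * v).z = u.z + v.z + u.x * v.y := rfl
@[simp] theorem one_x : (1 : HeisZ).x = 0 := rfl
@[simp] theorem one_y : (1 : HeisZ).y = 0 := rfl
@[simp] theorem one_z : (1 : HeisZ).z = 0 := rfl
@[simp] theorem inv_x (u : HeisZ) : (u⁻¹).x = -u.x := rfl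
@[simp] theorem inv_y (u : HeisZ) : (u⁻¹).y = -u.y := rfl
@[simp] theorem inv_z (u : HeisZ) : (u⁻¹).z = -u.z + u.x * u.y := rfl

instance : Group HeisZ :=
  Group.ofLeftAxioms
    (by intro a b c; ext <;> simp <;> ring)
    (by intro a; ext <;> simp)
    (by intro a; ext <;> simp)

theorem pow_x (u : HeisZ) (n : ℕ) : (u ^ n).x = n * u.x := by
  induction n with
  | zero => simp
  | succ n ih => rw [pow_succ, mul_x, ih]; push_cast; ring

theorem pow_y (u : HeisZ) (n : ℕ) : (u ^ n).y = n * u.y := by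
  induction n with
  | zero => simp
  | succ n ih => rw [pow_succ, mul_y, ih]; push_cast; ring

theorem pow_z (u : HeisZ) (hu : u.x = 0) (n : ℕ) : (u ^ n).z = n * u.z := by
  induction n with
  | zero => simp
  | succ n ih => rw [pow_succ, mul_z, ih, pow_x, hu]; push_cast; ring

/-- If `[a,b] = c^n` in the Heisenberg group, then `c` is central and `n` divides the
determinant of the images of `a`, `b` in the abelianization. -/
theorem key (a b c : HeisZ) (n : ℕ) (hn : 2 ≤ n) (h : a * b = c ^ n * (b * a)) :
    c.x = 0 ∧ c.y = 0 ∧ (n : ℤ) ∣ a.x * b.y - b.x * a.y := by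
  have hn0 : (n : ℤ) ≠ 0 := by positivity
  have h1 := congrArg HeisZ.x h
  have h2 := congrArg HeisZ.y h
  have h3 := congrArg HeisZ.z h
  simp only [mul_x, mul_y, mul_z, pow_x, pow_y] at h1 h2 h3
  have hx : c.x = 0 := by
    have : (n : ℤ) * c.x = 0 := by linarith
    exact (mul_eq_zero.mp this).resolve_left hn0
  have hy : c.y = 0 := by
    have : (n : ℤ) * c.y = 0 := by linarith
    exact (mul_eq_zero.mp this).resolve_left hn0
  refine ⟨hx, hy, c.z, ?_⟩
  rw [pow_z c hx, hx] at h3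
  linarith

end HeisZ

/-- If a group generated by `a,b,c` with `[a,b] = c^n`, `n ≥ 2`, has a free basis, then that basis
has at most one element. -/
theorem basis_subsingleton_of_commutator_eq_pow {G : Type*} [Group G] {ι : Type*}
    (B : FreeGroupBasis ι G) (a b c : G) (n : ℕ) (hn : 2 ≤ n)
    (h : a * b = c ^ n * (b * a)) (hgen : Subgroup.closure {a, b, c} = ⊤) (i j : ι) : i = j := by
  classical
  by_contra hij
  let φ : G →* HeisZ := B.lift fun t => if t = i then ⟨1, 0, 0⟩ else if t = j then ⟨0, 1, 0⟩ else 1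
  have hφi : φ (B i) = ⟨1, 0, 0⟩ := by simp [φ]
  have hφj : φ (B j) = ⟨0, 1, 0⟩ := by simp [φ, Ne.symm hij]
  obtain ⟨hx, hy, hd⟩ := HeisZ.key (φ a) (φ b) (φ c) n hn (by
    simpa only [map_mul, map_pow] using congrArg φ h)
  have hd' : (n : ℤ) ∣ (φ b).x * (φ a).y - (φ a).x * (φ b).y := by
    rw [← neg_sub]; exact (dvd_neg.mpr hd)
  have main : ∀ u v : G, (n : ℤ) ∣ (φ u).x * (φ v).y - (φ v).x * (φ u).y := by
    intro u v
    have hu : u ∈ Subgroup.closure {a, b, c} := by rw [hgen]; trivial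
    have hv : v ∈ Subgroup.closure {a, b, c} := by rw [hgen]; trivial
    induction hu, hv using Subgroup.closure_induction₂ with
    | mem u v hu hv =>
      rcases hu with rfl | rfl | rfl <;> rcases hv with rfl | rfl | rfl <;>
        first | exact hd | exact hd' | simp [hx, hy]
    | one_left v hv => simp
    | one_right v hv => simp
    | mul_left u u' v _ _ _ h1 h2 =>
      have := dvd_add h1 h2
      simp only [map_mul, HeisZ.mul_x, HeisZ.mul_y]
      exact this.trans (dvd_of_eq (by ring))
    | mul_right u v v' _ _ _ h1 h2 =>
      have := dvd_add h1 h2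
      simp only [map_mul, HeisZ.mul_x, HeisZ.mul_y]
      exact this.trans (dvd_of_eq (by ring))
    | inv_left u v _ _ h1 =>
      have := dvd_neg.mpr h1
      simp only [map_inv, HeisZ.inv_x, HeisZ.inv_y]
      exact this.trans (dvd_of_eq (by ring))
    | inv_right u v _ _ h1 =>
      have := dvd_neg.mpr h1
      simp only [map_inv, HeisZ.inv_x, HeisZ.inv_y]
      exact this.trans (dvd_of_eq (by ring))
  have h1 := main (B i) (B j)
  rw [hφi, hφj] at h1
  have := Int.le_of_dvd (by norm_num) h1
  simp at this
  omega

theorem freeGroup_comm_of_subsingleton {ι : Type*} (hs : ∀ i j : ι, i = j) (u v : FreeGroup ι) :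
    u * v = v * u := by
  have hu : u ∈ Subgroup.closure (Set.range (FreeGroup.of : ι → _)) := by
    rw [FreeGroup.closure_range_of]; trivial
  have hv : v ∈ Subgroup.closure (Set.range (FreeGroup.of : ι → _)) := by
    rw [FreeGroup.closure_range_of]; trivial
  change Commute u v
  induction hu, hv using Subgroup.closure_induction₂ with
  | mem u v hu hv =>
    obtain ⟨i, rfl⟩ := hu
    obtain ⟨j, rfl⟩ := hv
    rw [hs i j]
  | one_left v hv => exact Commute.one_left _
  | one_right v hv => exact Commute.one_right _
  | mul_left u u' v _ _ _ h1 h2 => exact h1.mul_left h2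
  | mul_right u v v' _ _ _ h1 h2 => exact h1.mul_right h2
  | inv_left u v _ _ h1 => exact h1.inv_left
  | inv_right u v _ _ h1 => exact h1.inv_right

/-- A nontrivial commutator in a free group is not a proper power: if
`[a,b] = c^k` with `k ≥ 2` in a free group, then `a` and `b` commute. -/
theorem commutator_not_proper_power {α : Type} (a b c : FreeGroup α) (k : ℤ)
    (hk : 2 ≤ k) (h : a * b * a⁻¹ * b⁻¹ = c ^ k) : a * b = b * a := by
  lift k to ℕ using by omega
  have hn : 2 ≤ k := by exact_mod_cast hk
  rw [zpow_natCast] at h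
  have h' : a * b = c ^ k * (b * a) := by rw [← h]; group
  let S : Set (FreeGroup α) := {a, b, c}
  let H := Subgroup.closure S
  let a' : H := ⟨a, Subgroup.subset_closure (by simp [S])⟩
  let b' : H := ⟨b, Subgroup.subset_closure (by simp [S])⟩
  let c' : H := ⟨c, Subgroup.subset_closure (by simp [S])⟩
  have hgen : Subgroup.closure {a', b', c'} = (⊤ : Subgroup H) := by
    rw [← Subgroup.closure_closure_coe_preimage (k := S)]
    congr 1
    ext t
    simp [S, a', b', c', Subtype.ext_iff]
  have hH : a' * b' = c' ^ k * (b' * a') := Subtype.ext h'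
  let B := IsFreeGroup.basis H
  have hs := basis_subsingleton_of_commutator_eq_pow B a' b' c' k hn hH hgen
  have hc := freeGroup_comm_of_subsingleton hs (B.repr a') (B.repr b')
  rw [← map_mul, ← map_mul] at hc
  exact congrArg Subtype.val (B.repr.injective hc)
end

section
/- Lyndon–Schützenberger: if a, b, c are elements of a free group and aᵖbᑫcʳ = 1 with integers p, q, r ≥ 2, then a, b, and c pairwise commute. -/
namespace LSProof


variable {α : Type}

/-- Commutative subgroups of free groups are cyclic. -/
theorem cyclic_of_comm (K : Subgroup (FreeGroup α))
    (hK : ∀ x ∈ K, ∀ y ∈ K, x * y = y * x) : ∃ t ∈ K, ∀ x ∈ K, ∃ i : ℤ, t ^ i = x := by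
  classical
  let e := IsFreeGroup.toFreeGroup K
  have hs : Subsingleton (IsFreeGroup.Generators K) := by
    refine ⟨fun i j => ?_⟩
    by_contra hij
    have h1 : (FreeGroup.of i * FreeGroup.of j : FreeGroup (IsFreeGroup.Generators K)) =
        FreeGroup.of j * FreeGroup.of i := by
      apply e.symm.injective
      rw [map_mul, map_mul]
      exact Subtype.ext (hK _ (e.symm _).2 _ (e.symm _).2)
    have h2 := congrArg FreeGroup.toWord h1
    simp [FreeGroup.toWord_mul, FreeGroup.reduce.cons] at h2
    exact hij h2.1
  rcases isEmpty_or_nonempty (IsFreeGroup.Generators K) with he | ⟨⟨i⟩⟩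
  · refine ⟨1, K.one_mem, fun x hx => ⟨0, ?_⟩⟩
    have : e ⟨x, hx⟩ = e 1 := Subsingleton.elim _ _
    have := e.injective this
    simpa using (congrArg Subtype.val this).symm
  · have : Unique (IsFreeGroup.Generators K) := ⟨⟨i⟩, fun j => Subsingleton.elim _ _⟩
    obtain ⟨g, hg⟩ := IsCyclic.exists_generator (α := FreeGroup (IsFreeGroup.Generators K))
    refine ⟨e.symm g, (e.symm g).2, fun x hx => ?_⟩
    obtain ⟨k, hk⟩ := hg (e ⟨x, hx⟩)
    refine ⟨k, ?_⟩
    have : e.symm (g ^ k) = ⟨x, hx⟩ := by simpa using congrArg e.symm hk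
    rw [map_zpow] at this
    simpa using congrArg Subtype.val this

theorem commute_of_pow {g h : FreeGroup α} {n : ℕ} (hn : n ≠ 0) (H : Commute (g ^ n) h) :
    Commute g h := by
  have h1 : (h⁻¹ * g * h) ^ n = g ^ n := by
    have := conj_pow (i := n) (a := h⁻¹) (b := g)
    rw [inv_inv] at this
    rw [this, mul_assoc, H.eq, inv_mul_cancel_left]
  have h2 := pow_left_injective hn h1
  have h3 : h⁻¹ * g * h = g := h2
  show g * h = h * g
  nth_rewrite 2 [← h3]
  group

theorem commute_of_zpow {g h : FreeGroup α} {n : ℤ} (hn : n ≠ 0) (H : Commute (g ^ n) h) :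
    Commute g h := by
  obtain ⟨m, rfl | rfl⟩ := n.eq_nat_or_neg
  · exact commute_of_pow (n := m) (by simpa using hn) (by simpa using H)
  · refine commute_of_pow (n := m) (by simpa using hn) ?_
    rw [zpow_neg, zpow_natCast] at H
    simpa using H.inv_left

theorem comm_cyclic {g h : FreeGroup α} (H : Commute g h) :
    ∃ (t : FreeGroup α) (i j : ℤ), t ^ i = g ∧ t ^ j = h := by
  have hc : ∀ x ∈ Subgroup.closure {g, h}, ∀ y ∈ Subgroup.closure {g, h}, x * y = y * x := by
    intro x hx y hy
    have h1 : ∀ u ∈ ({g, h} : Set (FreeGroup α)), ∀ v ∈ ({g, h} : Set (FreeGroup α)),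
        u * v = v * u := by
      rintro u (rfl | rfl) v (rfl | rfl)
      · rfl
      · exact H
      · exact H.symm
      · rfl
    have h2 := Subgroup.closure_le_centralizer_centralizer ({g, h} : Set (FreeGroup α))
    have h3 : Subgroup.closure {g, h} ≤ Subgroup.centralizer ({g, h} : Set (FreeGroup α)) := by
      rw [Subgroup.closure_le]
      intro u hu v hv
      exact h1 v hv u hu
    have h4 := h2 hx
    exact (Subgroup.mem_centralizer_iff.1 h4 y (h3 hy)).symm
  obtain ⟨t, -, ht⟩ := cyclic_of_comm _ hc
  obtain ⟨i, hi⟩ := ht g (Subgroup.subset_closure (by simp))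
  obtain ⟨j, hj⟩ := ht h (Subgroup.subset_closure (by simp))
  exact ⟨t, i, j, hi, hj⟩

theorem commute_trans {g b h : FreeGroup α} (hb : b ≠ 1) (h1 : Commute g b) (h2 : Commute b h) :
    Commute g h := by
  obtain ⟨t, i, j, rfl, rfl⟩ := comm_cyclic h1
  have hj : j ≠ 0 := by rintro rfl; simp at hb
  exact (commute_of_zpow hj h2).zpow_left i

/-- Root extraction. -/
theorem exists_root {b : FreeGroup α} (hb : b ≠ 1) :
    ∃ (b₀ : FreeGroup α) (m : ℕ), 1 ≤ m ∧ b = b₀ ^ m ∧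
      ∀ g, Commute g b₀ → g ∈ Subgroup.zpowers b₀ := by
  have hc : ∀ x ∈ Subgroup.centralizer {b}, ∀ y ∈ Subgroup.centralizer {b}, x * y = y * x := by
    intro x hx y hy
    rw [Subgroup.mem_centralizer_singleton_iff] at hx hy
    exact commute_trans hb (show Commute x b from hx) (show Commute b y from hy.symm)
  obtain ⟨t, ht, hgen⟩ := cyclic_of_comm _ hc
  obtain ⟨i, hi⟩ := hgen b (by rw [Subgroup.mem_centralizer_singleton_iff])
  have hi0 : i ≠ 0 := by rintro rfl; simp at hi; exact hb hi.symm
  have key : ∀ g, Commute g t → g ∈ Subgroup.zpowers t := by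
    intro g hg
    obtain ⟨k, hk⟩ := hgen g (by
      rw [Subgroup.mem_centralizer_singleton_iff, ← hi]; exact hg.zpow_right i)
    exact ⟨k, hk⟩
  obtain ⟨m, rfl | rfl⟩ := i.eq_nat_or_neg
  · exact ⟨t, m, by omega, by simpa using hi.symm, key⟩
  · refine ⟨t⁻¹, m, by omega, ?_, fun g hg => ?_⟩
    · rw [← hi, zpow_neg, zpow_natCast, inv_pow]
    · rw [Subgroup.zpowers_inv]
      exact key g (by simpa using hg.inv_right)

theorem nontrivial_gens (K : Subgroup (FreeGroup α)) {g h : FreeGroup α} (hg : g ∈ K) (hh : h ∈ K)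
    (hgh : ¬ Commute g h) : ∃ i j : IsFreeGroup.Generators K, i ≠ j := by
  by_contra hcon
  push Not at hcon
  have : Subsingleton (IsFreeGroup.Generators K) := ⟨hcon⟩
  let e := IsFreeGroup.toFreeGroup K
  have key : ∀ x y : FreeGroup (IsFreeGroup.Generators K), x * y = y * x := by
    rcases isEmpty_or_nonempty (IsFreeGroup.Generators K) with he | ⟨⟨i⟩⟩
    · intro x y; exact Subsingleton.elim _ _
    · have : Unique (IsFreeGroup.Generators K) := ⟨⟨i⟩, fun j => Subsingleton.elim _ _⟩
      intro x y
      let _ := IsCyclic.commGroup (α := FreeGroup (IsFreeGroup.Generators K))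
      exact mul_comm x y
  apply hgh
  have := key (e ⟨g, hg⟩) (e ⟨h, hh⟩)
  rw [← map_mul, ← map_mul] at this
  exact congrArg Subtype.val (e.injective this)

/-- A homomorphism to `ℤ` killing `b`. -/
theorem exists_hom_int (K : Subgroup (FreeGroup α)) {b g : FreeGroup α} (hb : b ∈ K) (hg : g ∈ K)
    (hbg : ¬ Commute b g) :
    ∃ φ : K →* Multiplicative ℤ, φ ⟨b, hb⟩ = 1 ∧ φ ≠ 1 := by
  classical
  obtain ⟨i, j, hij⟩ := nontrivial_gens K hb hg hbg
  let ex (s t : ℤ) : K →* Multiplicative ℤ := IsFreeGroup.lift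
    (fun k => if k = i then Multiplicative.ofAdd s else if k = j then Multiplicative.ofAdd t else 1)
  have exi : ∀ s t, ex s t (IsFreeGroup.of i) = Multiplicative.ofAdd s := by
    intro s t; simp [ex]
  have exj : ∀ s t, ex s t (IsFreeGroup.of j) = Multiplicative.ofAdd t := by
    intro s t; simp [ex, hij.symm]
  have lin : ∀ s t, ex s t = (ex 1 0) ^ s * (ex 0 1) ^ t := by
    intro s t
    apply IsFreeGroup.ext_hom
    intro k
    by_cases hk : k = i
    · subst hk
      rw [exi, MonoidHom.mul_apply, MonoidHom.zpow_apply, MonoidHom.zpow_apply, exi, exi]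
      simp [← ofAdd_zsmul]
    · by_cases hk' : k = j
      · subst hk'
        rw [exj, MonoidHom.mul_apply, MonoidHom.zpow_apply, MonoidHom.zpow_apply, exj, exj]
        simp [← ofAdd_zsmul]
      · simp [ex, hk, hk']
  set m := Multiplicative.toAdd (ex 1 0 ⟨b, hb⟩) with hm
  set n := Multiplicative.toAdd (ex 0 1 ⟨b, hb⟩) with hn
  have val : ∀ s t, Multiplicative.toAdd (ex s t ⟨b, hb⟩) = s * m + t * n := by
    intro s t
    rw [lin, MonoidHom.mul_apply, MonoidHom.zpow_apply, MonoidHom.zpow_apply]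
    simp [hm, hn]
  by_cases h0 : m = 0
  · refine ⟨ex 1 0, ?_, ?_⟩
    · exact h0
    · intro h
      have := exi 1 0
      rw [h] at this
      exact absurd (congrArg Multiplicative.toAdd this) (by simp)
  · refine ⟨ex n (-m), ?_, ?_⟩
    · have := val n (-m)
      have h2 : Multiplicative.toAdd (ex n (-m) ⟨b, hb⟩) = 0 := by rw [this]; ring
      exact h2
    · intro h
      have := exj n (-m)
      rw [h] at this
      have := congrArg Multiplicative.toAdd this
      simp at this
      exact h0 (by simpa using this)

/-- Local invariant order on cosets of a maximal cyclic subgroup. -/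
theorem exists_pos {b : FreeGroup α} (hb : ∀ g, Commute g b → g ∈ Subgroup.zpowers b) :
    ∀ (n : ℕ) (S : Finset (FreeGroup α)), S.card ≤ n → (∀ s ∈ S, s ∉ Subgroup.zpowers b) →
    ∃ P : Set (FreeGroup α), (∀ x ∈ P, ∀ y ∈ P, x * y ∈ P) ∧
      (∀ c ∈ Subgroup.zpowers b, ∀ x ∈ P, c * x ∈ P ∧ x * c ∈ P) ∧
      (∀ x ∈ P, x ∉ Subgroup.zpowers b) ∧ (∀ s ∈ S, s ∈ P ∨ s⁻¹ ∈ P) := by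
  classical
  intro n
  induction n with
  | zero =>
    intro S hS _
    have : S = ∅ := by simpa using hS
    subst this
    exact ⟨∅, by simp, by simp, by simp, by simp⟩
  | succ n ih =>
    intro S hS hSb
    rcases S.eq_empty_or_nonempty with rfl | ⟨s₀, hs₀⟩
    · exact ⟨∅, by simp, by simp, by simp, by simp⟩
    set K := Subgroup.closure (insert b (S : Set (FreeGroup α))) with hK
    have hbK : b ∈ K := Subgroup.subset_closure (by simp)
    have hSK : ∀ s ∈ S, s ∈ K := fun s hs => Subgroup.subset_closure (by simp [hs])
    have hnc : ¬ Commute b s₀ := fun h => hSb s₀ hs₀ (hb _ h.symm)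
    obtain ⟨φ, hφb, hφ⟩ := exists_hom_int K hbK (hSK _ hs₀) hnc
    have hCK : ∀ c ∈ Subgroup.zpowers b, c ∈ K := by
      rintro c ⟨k, rfl⟩; exact K.zpow_mem hbK k
    have hφC : ∀ c (hc : c ∈ Subgroup.zpowers b), φ ⟨c, hCK c hc⟩ = 1 := by
      rintro c ⟨k, rfl⟩
      have : (⟨b ^ k, hCK _ ⟨k, rfl⟩⟩ : K) = ⟨b, hbK⟩ ^ k := by ext; simp
      show φ (⟨b ^ k, hCK _ ⟨k, rfl⟩⟩ : K) = 1
      rw [this, map_zpow, hφb, one_zpow]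
    -- some element of S is not killed
    have hex : ∃ s, ∃ hs : s ∈ S, φ ⟨s, hSK s hs⟩ ≠ 1 := by
      by_contra hcon
      push Not at hcon
      apply hφ
      have : ∀ x (hx : x ∈ K), φ ⟨x, hx⟩ = 1 := by
        intro x hx
        induction hx using Subgroup.closure_induction with
        | mem x hx =>
          rcases hx with rfl | hx
          · exact hφb
          · exact hcon x hx
        | one => exact map_one φ
        | mul x y hx hy h1 h2 =>
          have := map_mul φ ⟨x, hx⟩ ⟨y, hy⟩
          rw [h1, h2, one_mul] at this
          exact this
        | inv x hx h1 =>
          have := map_inv φ ⟨x, hx⟩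
          rw [h1, inv_one] at this
          exact this
      ext ⟨x, hx⟩
      rw [this x hx]; rfl
    obtain ⟨s₁, hs₁, hs₁φ⟩ := hex
    set S' := S.filter (fun s => ∃ hs : s ∈ K, φ ⟨s, hs⟩ = 1) with hS'
    have hcard : S'.card ≤ n := by
      have : S' ⊂ S := by
        refine Finset.filter_ssubset.2 ⟨s₁, hs₁, ?_⟩
        rintro ⟨hs, h⟩
        exact hs₁φ h
      have := Finset.card_lt_card this
      omega
    obtain ⟨P', h1, h2, h3, h4⟩ := ih S' hcard (fun s hs => hSb s (Finset.mem_filter.1 hs).1)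
    refine ⟨{x | ∃ hx : x ∈ K, 1 < φ ⟨x, hx⟩ ∨ (φ ⟨x, hx⟩ = 1 ∧ x ∈ P')}, ?_, ?_, ?_, ?_⟩
    · rintro x ⟨hx, hx'⟩ y ⟨hy, hy'⟩
      refine ⟨K.mul_mem hx hy, ?_⟩
      have hm : φ ⟨x * y, K.mul_mem hx hy⟩ = φ ⟨x, hx⟩ * φ ⟨y, hy⟩ :=
        map_mul φ ⟨x, hx⟩ ⟨y, hy⟩
      rw [hm]
      rcases hx' with hx' | ⟨hx', hxP⟩ <;> rcases hy' with hy' | ⟨hy', hyP⟩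
      · left; exact one_lt_mul'' hx' hy'
      · left; rw [hy', mul_one]; exact hx'
      · left; rw [hx', one_mul]; exact hy'
      · right; exact ⟨by rw [hx', hy', one_mul], h1 x hxP y hyP⟩
    · rintro c hc x ⟨hx, hx'⟩
      have hcx : φ ⟨c * x, K.mul_mem (hCK c hc) hx⟩ = φ ⟨x, hx⟩ := by
        have := map_mul φ ⟨c, hCK c hc⟩ ⟨x, hx⟩
        rw [hφC c hc, one_mul] at this
        exact this
      have hxc : φ ⟨x * c, K.mul_mem hx (hCK c hc)⟩ = φ ⟨x, hx⟩ := by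
        have := map_mul φ ⟨x, hx⟩ ⟨c, hCK c hc⟩
        rw [hφC c hc, mul_one] at this
        exact this
      constructor
      · refine ⟨K.mul_mem (hCK c hc) hx, ?_⟩
        rw [hcx]
        exact hx'.imp id (fun h => ⟨h.1, (h2 c hc x h.2).1⟩)
      · refine ⟨K.mul_mem hx (hCK c hc), ?_⟩
        rw [hxc]
        exact hx'.imp id (fun h => ⟨h.1, (h2 c hc x h.2).2⟩)
    · rintro x ⟨hx, hx'⟩ hxC
      rcases hx' with hx' | ⟨-, hxP⟩
      · rw [hφC x hxC] at hx'
        exact lt_irrefl _ hx'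
      · exact h3 x hxP hxC
    · intro s hs
      have hinv : φ ⟨s⁻¹, K.inv_mem (hSK s hs)⟩ = (φ ⟨s, hSK s hs⟩)⁻¹ :=
        map_inv φ ⟨s, hSK s hs⟩
      rcases lt_trichotomy (φ ⟨s, hSK s hs⟩) 1 with h | h | h
      · right
        refine ⟨K.inv_mem (hSK s hs), Or.inl ?_⟩
        rw [hinv]
        exact one_lt_inv'.2 h
      · rcases h4 s (Finset.mem_filter.2 ⟨hs, hSK s hs, h⟩) with h5 | h5
        · left; exact ⟨hSK s hs, Or.inr ⟨h, h5⟩⟩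
        · right
          refine ⟨K.inv_mem (hSK s hs), Or.inr ⟨?_, h5⟩⟩
          rw [hinv, h, inv_one]
      · left; exact ⟨hSK s hs, Or.inl h⟩

end LSProof

namespace LSProof

variable {α : Type}

/-- Two non-commuting elements of a free group generate a subgroup in which they can be mapped
arbitrarily to a finite group. -/
theorem exists_hom {a c : FreeGroup α} (hac : ¬ Commute a c) (H : Subgroup (FreeGroup α))
    (hH : H = Subgroup.closure {a, c}) (ha : a ∈ H) (hc : c ∈ H)
    {Q : Type} [Group Q] [Finite Q] (x y : Q) :
    ∃ θ : H →* Q, θ ⟨a, ha⟩ = x ∧ θ ⟨c, hc⟩ = y := by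
  classical
  obtain ⟨i, j, hij⟩ := nontrivial_gens H ha hc hac
  let L : Q × Q → (H →* Q) := fun s => IsFreeGroup.lift
    (fun k => if k = i then s.1 else if k = j then s.2 else 1)
  have hLi : ∀ s, L s (IsFreeGroup.of i) = s.1 := by intro s; simp [L]
  have hLj : ∀ s, L s (IsFreeGroup.of j) = s.2 := by intro s; simp [L, hij.symm]
  let R : Q × Q → Q × Q := fun s => (L s ⟨a, ha⟩, L s ⟨c, hc⟩)
  have hR : Function.Injective R := by
    intro s t hst
    have h1 : L s ⟨a, ha⟩ = L t ⟨a, ha⟩ := congrArg Prod.fst hst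
    have h2 : L s ⟨c, hc⟩ = L t ⟨c, hc⟩ := congrArg Prod.snd hst
    have key : ∀ g (hg : g ∈ H), L s ⟨g, hg⟩ = L t ⟨g, hg⟩ := by
      intro g hg
      have hg' : g ∈ Subgroup.closure {a, c} := hH ▸ hg
      have : (∃ hg : g ∈ H, L s ⟨g, hg⟩ = L t ⟨g, hg⟩) := by
        induction hg' using Subgroup.closure_induction with
        | mem x hx =>
          rcases hx with rfl | rfl
          · exact ⟨ha, h1⟩
          · exact ⟨hc, h2⟩
        | one => exact ⟨H.one_mem, (map_one (L s)).trans (map_one (L t)).symm⟩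
        | mul x y hx hy i1 i2 =>
          obtain ⟨hx', i1⟩ := i1 (hH ▸ hx)
          obtain ⟨hy', i2⟩ := i2 (hH ▸ hy)
          refine ⟨H.mul_mem hx' hy', ?_⟩
          have e1 := map_mul (L s) ⟨x, hx'⟩ ⟨y, hy'⟩
          have e2 := map_mul (L t) ⟨x, hx'⟩ ⟨y, hy'⟩
          rw [i1, i2, ← e2] at e1
          exact e1
        | inv x hx i1 =>
          obtain ⟨hx', i1⟩ := i1 (hH ▸ hx)
          refine ⟨H.inv_mem hx', ?_⟩
          have e1 := map_inv (L s) ⟨x, hx'⟩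
          have e2 := map_inv (L t) ⟨x, hx'⟩
          rw [i1, ← e2] at e1
          exact e1
      exact this.2
    have h3 : L s = L t := MonoidHom.ext fun g => key g.1 g.2
    refine Prod.ext ?_ ?_
    · rw [← hLi s, ← hLi t, h3]
    · rw [← hLj s, ← hLj t, h3]
  obtain ⟨s, hs⟩ := (Finite.injective_iff_surjective.1 hR) (x, y)
  exact ⟨L s, congrArg Prod.fst hs, congrArg Prod.snd hs⟩

/-- roots of unity in finite prime fields -/
theorem exists_field_unit (k p : ℕ) (hk : k ≠ 0) : ∃ ℓ : ℕ, ℓ.Prime ∧ p < ℓ ∧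
    ∃ u : (ZMod ℓ)ˣ, orderOf u = k := by
  obtain ⟨ℓ, hℓ, hp, hmod⟩ := Nat.exists_prime_gt_modEq_one p hk
  refine ⟨ℓ, hℓ, hp, ?_⟩
  have : Fact ℓ.Prime := ⟨hℓ⟩
  obtain ⟨g, hg⟩ := IsCyclic.exists_ofOrder_eq_natCard (α := (ZMod ℓ)ˣ)
  have hcard : Nat.card (ZMod ℓ)ˣ = ℓ - 1 := by
    rw [Nat.card_eq_fintype_card, ZMod.card_units_eq_totient, Nat.totient_prime hℓ]
  have hd : k ∣ ℓ - 1 := (Nat.modEq_iff_dvd' hℓ.one_lt.le).1 hmod.symm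
  obtain ⟨d, hd⟩ := hd
  have hpos : ℓ - 1 ≠ 0 := by have := hℓ.two_le; omega
  have hd0 : d ≠ 0 := by rintro rfl; simp at hd; omega
  refine ⟨g ^ d, ?_⟩
  rw [orderOf_pow' g hd0, hg, hcard, hd, Nat.gcd_eq_right (Dvd.intro_left k rfl)]
  exact Nat.mul_div_cancel _ (Nat.pos_of_ne_zero hd0)

/-- `a⁻ᵖ c⁻ʳ` is not a proper power in the subgroup generated by `a` and `c`. -/
theorem not_proper_power {a c : FreeGroup α} (hac : ¬ Commute a c) (H : Subgroup (FreeGroup α))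
    (hH : H = Subgroup.closure {a, c}) (ha : a ∈ H) (hc : c ∈ H) {p r m : ℕ}
    (hp : 2 ≤ p) (hr : 2 ≤ r) (hm : 2 ≤ m) (W : H)
    (hW : W ^ m = (⟨a, ha⟩ ^ p)⁻¹ * (⟨c, hc⟩ ^ r)⁻¹) : False := by
  classical
  obtain ⟨ℓ, hℓ, hpl, u, hu⟩ := exists_field_unit (r * m) p (by positivity)
  have : Fact ℓ.Prime := ⟨hℓ⟩
  obtain ⟨ρ, hρa, hρc⟩ := exists_hom hac H hH ha hc (1 : (ZMod ℓ)ˣ) u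
  set η : (ZMod ℓ)ˣ := u ^ m with hη
  have hηr : η ^ r = 1 := by
    rw [hη, ← pow_mul, mul_comm, ← hu, pow_orderOf_eq_one]
  obtain ⟨θ, hθa, hθc⟩ := exists_hom hac H hH ha hc
    (Equiv.addRight (1 : ZMod ℓ)) (Units.mulLeft η : Equiv.Perm (ZMod ℓ))
  have aff : ∀ g (hg : g ∈ H), ∀ s t : ZMod ℓ, θ ⟨g, hg⟩ s - θ ⟨g, hg⟩ t =
      ((ρ ⟨g, hg⟩ ^ m : (ZMod ℓ)ˣ) : ZMod ℓ) * (s - t) := by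
    intro g hg
    have hg' : g ∈ Subgroup.closure {a, c} := hH ▸ hg
    have : (∃ hg : g ∈ H, ∀ s t : ZMod ℓ, θ ⟨g, hg⟩ s - θ ⟨g, hg⟩ t =
      ((ρ ⟨g, hg⟩ ^ m : (ZMod ℓ)ˣ) : ZMod ℓ) * (s - t)) := by
      induction hg' using Subgroup.closure_induction with
      | mem x hx =>
        rcases hx with rfl | rfl
        · refine ⟨ha, fun s t => ?_⟩
          rw [hθa, hρa]; simp
        · refine ⟨hc, fun s t => ?_⟩
          rw [hθc, hρc, ← hη]; simp [mul_sub]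
      | one =>
        refine ⟨H.one_mem, fun s t => ?_⟩
        have e1 : (⟨1, H.one_mem⟩ : H) = 1 := rfl
        rw [e1, map_one, map_one]; simp
      | mul x y hx hy i1 i2 =>
        obtain ⟨hx', i1⟩ := i1 (hH ▸ hx)
        obtain ⟨hy', i2⟩ := i2 (hH ▸ hy)
        refine ⟨H.mul_mem hx' hy', fun s t => ?_⟩
        have e1 : (⟨x * y, H.mul_mem hx' hy'⟩ : H) = ⟨x, hx'⟩ * ⟨y, hy'⟩ := rfl
        rw [e1, map_mul, map_mul, Equiv.Perm.mul_apply, Equiv.Perm.mul_apply, i1, i2, mul_pow]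
        push_cast; ring
      | inv x hx i1 =>
        obtain ⟨hx', i1⟩ := i1 (hH ▸ hx)
        refine ⟨H.inv_mem hx', fun s t => ?_⟩
        have e1 : (⟨x⁻¹, H.inv_mem hx'⟩ : H) = ⟨x, hx'⟩⁻¹ := rfl
        rw [e1, map_inv, map_inv]
        have := i1 ((θ ⟨x, hx'⟩)⁻¹ s) ((θ ⟨x, hx'⟩)⁻¹ t)
        have e2 : ∀ z, θ ⟨x, hx'⟩ ((θ ⟨x, hx'⟩)⁻¹ z) = z := fun z => Equiv.apply_symm_apply _ z
        rw [e2, e2] at this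
        rw [this, inv_pow, Units.inv_mul_cancel_left]
    exact this.2
  have hlam : ρ W ^ m ≠ 1 := by
    rw [← map_pow, hW, map_mul, map_inv, map_inv, map_pow, map_pow, hρa, hρc]
    simp only [one_pow, inv_one, one_mul, ne_eq, inv_eq_one]
    intro h1
    have := orderOf_dvd_of_pow_eq_one h1
    rw [hu] at this
    have := Nat.le_of_dvd (by omega) this
    nlinarith
  obtain ⟨w, hw⟩ := W
  set lam : ZMod ℓ := ((ρ ⟨w, hw⟩ ^ m : (ZMod ℓ)ˣ) : ZMod ℓ) with hlamd
  have hl1 : 1 - lam ≠ 0 := by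
    intro h0
    apply hlam
    ext
    rw [← hlamd]
    simpa using (sub_eq_zero.1 h0).symm
  obtain ⟨u0, hu0⟩ : ∃ u0, θ ⟨w, hw⟩ u0 = u0 := by
    refine ⟨θ ⟨w, hw⟩ 0 / (1 - lam), ?_⟩
    set u1 := θ ⟨w, hw⟩ 0 with hu1
    have := aff w hw (u1 / (1 - lam)) 0
    rw [← hu1, ← hlamd, sub_zero, sub_eq_iff_eq_add] at this
    rw [this]
    field_simp
    ring
  have hu0m : θ (⟨w, hw⟩ ^ m) u0 = u0 := by
    rw [map_pow]
    exact Function.IsFixedPt.perm_pow hu0 m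
  rw [hW, map_mul, map_inv, map_inv, map_pow, map_pow, hθa, hθc] at hu0m
  have hcr : (Units.mulLeft η : Equiv.Perm (ZMod ℓ)) ^ r = 1 := by
    ext z
    have : ∀ k : ℕ, ((Units.mulLeft η : Equiv.Perm (ZMod ℓ)) ^ k) z = ((η ^ k : (ZMod ℓ)ˣ) : ZMod ℓ) * z := by
      intro k
      induction k with
      | zero => simp
      | succ k ih => rw [pow_succ', Equiv.Perm.mul_apply, ih, pow_succ']; simp [mul_assoc]
    rw [this, hηr]; simp
  have hap : ∀ z, ((Equiv.addRight (1 : ZMod ℓ)) ^ p) z = z + p := by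
    intro z
    have : ∀ k : ℕ, ((Equiv.addRight (1 : ZMod ℓ)) ^ k) z = z + k := by
      intro k
      induction k with
      | zero => simp
      | succ k ih => rw [pow_succ', Equiv.Perm.mul_apply, ih]; simp [add_assoc]
    exact this p
  rw [hcr, inv_one, mul_one, Equiv.Perm.inv_eq_iff_eq, hap] at hu0m
  have : (p : ZMod ℓ) = 0 := by simpa using hu0m
  rw [ZMod.natCast_eq_zero_iff] at this
  have := Nat.le_of_dvd (by omega) this
  omega

end LSProof

namespace LSProof

variable {α : Type}

theorem reduced_ne_one {L : List (α × Bool)} (h : FreeGroup.IsReduced L) (hne : L ≠ []) :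
    FreeGroup.mk L ≠ 1 := by
  classical
  intro h1
  have := congrArg FreeGroup.toWord h1
  rw [FreeGroup.toWord_mk, h.reduce_eq, FreeGroup.toWord_one] at this
  exact hne this

theorem exists_line_aux (w : List (α × Bool)) (hw : FreeGroup.IsCyclicallyReduced w)
    (hne : w ≠ []) (β : ℤ) (hβ : β = w.length) :
    ∃ (v : ℤ → FreeGroup α) (l : ℤ → α × Bool), v 0 = 1 ∧
      (∀ i, v (i + β) = FreeGroup.mk w * v i) ∧ (∀ i, l (i + β) = l i) ∧
      (∀ i, v (i + 1) = v i * FreeGroup.mk [l i]) ∧ Function.Injective v := by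
  have hlen : 0 < w.length := List.length_pos_iff.2 hne
  have hβ0 : 0 < β := by omega
  have hlt : ∀ i : ℤ, (i % β).toNat < w.length := by
    intro i
    have h1 := Int.emod_nonneg i hβ0.ne'
    have h2 := Int.emod_lt_of_pos i hβ0
    omega
  let l : ℤ → α × Bool := fun i => w[(i % β).toNat]'(hlt i)
  let v : ℤ → FreeGroup α := fun i =>
    FreeGroup.mk w ^ (i / β) * FreeGroup.mk (w.take (i % β).toNat)
  have hstep : ∀ i : ℤ, (i % β + 1 < β ∧ (i + 1) / β = i / β ∧ (i + 1) % β = i % β + 1) ∨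
      (i % β + 1 = β ∧ (i + 1) / β = i / β + 1 ∧ (i + 1) % β = 0) := by
    intro i
    have h1 := Int.emod_nonneg i hβ0.ne'
    have h2 := Int.emod_lt_of_pos i hβ0
    have h3 := Int.emod_add_mul_ediv i β
    rcases lt_or_eq_of_le (show i % β + 1 ≤ β by omega) with h | h
    · left
      have := (Int.ediv_emod_unique (a := i + 1) (b := β) (r := i % β + 1) (q := i / β) hβ0).2
        ⟨by linarith, by omega, h⟩
      exact ⟨h, this.1, this.2⟩
    · right
      have := (Int.ediv_emod_unique (a := i + 1) (b := β) (r := 0) (q := i / β + 1) hβ0).2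
        ⟨by rw [mul_add, mul_one]; linarith, by omega, hβ0⟩
      exact ⟨h, this.1, this.2⟩
  have hv1 : ∀ i, v (i + 1) = v i * FreeGroup.mk [l i] := by
    intro i
    have h1 := Int.emod_nonneg i hβ0.ne'
    have htake : FreeGroup.mk (w.take (i % β).toNat) * FreeGroup.mk [l i] =
        FreeGroup.mk (w.take ((i % β).toNat + 1)) := by
      rw [FreeGroup.mul_mk, List.take_add_one, List.getElem?_eq_getElem (hlt i)]
      rfl
    simp only [v]
    rw [mul_assoc, htake]
    rcases hstep i with ⟨ha, hb, hc⟩ | ⟨ha, hb, hc⟩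
    · rw [hb, hc, Int.toNat_add h1 (by norm_num)]; rfl
    · rw [hb, hc]
      have : (i % β).toNat + 1 = w.length := by omega
      rw [this, List.take_length, zpow_add_one]
      simp [← FreeGroup.one_eq_mk]
  have hred : ∀ i, (l i).1 = (l (i + 1)).1 → (l i).2 = (l (i + 1)).2 := by
    intro i
    have h1 := Int.emod_nonneg i hβ0.ne'
    rcases hstep i with ⟨ha, hb, hc⟩ | ⟨ha, hb, hc⟩
    · have := (List.isChain_iff_getElem.1 hw.1) (i % β).toNat (by omega)
      have he : l (i + 1) = w[(i % β).toNat + 1]'(by omega) := by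
        simp only [l, hc, Int.toNat_add h1 (show (0:ℤ) ≤ 1 by norm_num)]; rfl
      rw [he]
      exact this
    · have e1 : l i ∈ w.getLast? := by
        rw [List.getLast?_eq_getElem?, Option.mem_def,
          show w.length - 1 = (i % β).toNat by omega]
        exact List.getElem?_eq_getElem (hlt i)
      have e2 : l (i + 1) ∈ w.head? := by
        rw [List.head?_eq_getElem?, Option.mem_def, List.getElem?_eq_getElem hlen]
        simp only [l, hc]; rfl
      exact hw.2 _ e1 _ e2
  have hword : ∀ (i : ℤ) (n : ℕ), v (i + n) =
      v i * FreeGroup.mk ((List.range n).map (fun k : ℕ => l (i + k))) := by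
    intro i n
    induction n with
    | zero => simp [← FreeGroup.one_eq_mk]
    | succ n ih =>
      rw [List.range_succ, List.map_append, ← FreeGroup.mul_mk, ← mul_assoc, ← ih]
      push_cast
      rw [← add_assoc, hv1]; rfl
  have hinj : ∀ (i : ℤ) (n : ℕ), n ≠ 0 → v (i + n) ≠ v i := by
    intro i n hn h
    rw [hword, mul_eq_left] at h
    refine reduced_ne_one ?_ ?_ h
    · refine List.isChain_iff_getElem.2 ?_
      intro k hk
      simp only [List.getElem_map, List.getElem_range]
      have := hred (i + k)
      push_cast
      rw [← add_assoc]
      exact this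
    · simpa using hn
  refine ⟨v, l, ?_, ?_, ?_, hv1, ?_⟩
  · simp [v, ← FreeGroup.one_eq_mk]
  · intro i
    simp only [v]
    rw [Int.add_ediv_of_dvd_right (dvd_refl β), Int.ediv_self hβ0.ne', Int.add_emod_right,
      add_comm, zpow_one_add, mul_assoc]
  · intro i
    simp only [l, Int.add_emod_right]
  · intro i j hij
    rcases lt_trichotomy i j with h | h | h
    · exact absurd hij.symm (by
        have := hinj i (j - i).toNat (by omega)
        rwa [show i + ((j - i).toNat : ℤ) = j by omega] at this)
    · exact h
    · exact absurd hij (by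
        have := hinj j (i - j).toNat (by omega)
        rwa [show j + ((i - j).toNat : ℤ) = i by omega] at this)

/-- The axis of a cyclically reduced element: vertices `v`, labels `x`, edge origins `t`. -/
structure Line (b : FreeGroup α) (β : ℤ) where
  v : ℤ → FreeGroup α
  x : ℤ → α
  t : ℤ → FreeGroup α
  pos : 0 < β
  v_zero : v 0 = 1
  v_add : ∀ i, v (i + β) = b * v i
  x_add : ∀ i, x (i + β) = x i
  t_add : ∀ i, t (i + β) = b * t i
  edge : ∀ i, (t i = v i ∧ v (i + 1) = t i * FreeGroup.of (x i)) ∨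
    (t i = v (i + 1) ∧ v i = t i * FreeGroup.of (x i))
  inj : Function.Injective v

theorem exists_line (w : List (α × Bool)) (hw : FreeGroup.IsCyclicallyReduced w)
    (hne : w ≠ []) : ∃ β, Nonempty (Line (FreeGroup.mk w) β) := by
  obtain ⟨v, l, h0, h1, h2, h3, h4⟩ := exists_line_aux w hw hne w.length rfl
  refine ⟨w.length, ⟨⟨v, fun i => (l i).1, fun i => if (l i).2 then v i else v (i + 1), ?_, h0, h1,
    ?_, ?_, ?_, h4⟩⟩⟩
  · exact_mod_cast List.length_pos_iff.2 hne
  · intro i; rw [h2]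
  · intro i
    rw [h2]
    split
    · exact h1 i
    · rw [← h1]; congr 1; ring
  · intro i
    have h5 := h3 i
    rcases hl : l i with ⟨y, s⟩
    rw [hl] at h5
    cases s
    · right
      have : (FreeGroup.mk [(y, false)]) = (FreeGroup.of y)⁻¹ := rfl
      rw [this] at h5
      simp [h5]
    · left
      refine ⟨by simp, ?_⟩
      simp only [if_true]
      exact h5

namespace Line

variable {b : FreeGroup α} {β : ℤ} (L : Line b β)

theorem t_inj {i j : ℤ} (ht : L.t i = L.t j) (hx : L.x i = L.x j) : i = j := by
  rcases L.edge i with ⟨h1, h2⟩ | ⟨h1, h2⟩ <;> rcases L.edge j with ⟨h3, h4⟩ | ⟨h3, h4⟩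
  · exact L.inj (by rw [← h1, ← h3, ht])
  · have e1 := L.inj (h1.symm.trans (ht.trans h3))
    have e2 : L.v (i + 1) = L.v j := by rw [h2, h4, ht, hx]
    have := L.inj e2
    omega
  · have e1 := L.inj (h1.symm.trans (ht.trans h3))
    have e2 : L.v i = L.v (j + 1) := by rw [h2, h4, ht, hx]
    have := L.inj e2
    omega
  · have := L.inj (h1.symm.trans (ht.trans h3))
    omega

theorem t_ends (j : ℤ) : (∃ k, L.v k = L.t j) ∧ ∃ k, L.v k = L.t j * FreeGroup.of (L.x j) := by
  rcases L.edge j with ⟨h3, h4⟩ | ⟨h3, h4⟩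
  · exact ⟨⟨j, h3.symm⟩, ⟨j + 1, h4⟩⟩
  · exact ⟨⟨j + 1, h3.symm⟩, ⟨j, h4⟩⟩

theorem t_v_left {i j : ℤ} (hx : L.x j = L.x i) :
    ∃ k, L.t j * (L.t i)⁻¹ = L.v k * (L.v i)⁻¹ := by
  obtain ⟨⟨k1, hk1⟩, ⟨k2, hk2⟩⟩ := L.t_ends j
  rcases L.edge i with ⟨h1, h2⟩ | ⟨h1, h2⟩
  · exact ⟨k1, by rw [hk1, h1]⟩
  · exact ⟨k2, by rw [hk2, h2, hx]; group⟩

theorem t_v_right {i j : ℤ} (hx : L.x j = L.x i) :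
    ∃ k, L.t j * (L.t i)⁻¹ = L.v k * (L.v (i + 1))⁻¹ := by
  obtain ⟨⟨k1, hk1⟩, ⟨k2, hk2⟩⟩ := L.t_ends j
  rcases L.edge i with ⟨h1, h2⟩ | ⟨h1, h2⟩
  · exact ⟨k2, by rw [hk2, h2, hx]; group⟩
  · exact ⟨k1, by rw [hk1, h1]⟩

theorem v_add_mul (i k : ℤ) : L.v (i + k * β) = b ^ k * L.v i := by
  induction k using Int.induction_on with
  | zero => simp
  | succ k ih =>
    rw [add_mul, one_mul, ← add_assoc, L.v_add, ih, ← mul_assoc, zpow_add_one,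
      (Commute.self_zpow b k).eq]
  | pred k ih =>
    have := L.v_add (i + (-(k:ℤ) - 1) * β)
    rw [show i + (-(k:ℤ) - 1) * β + β = i + -(k:ℤ) * β by ring, ih] at this
    rw [show (-(k:ℤ) - 1) = -1 + -(k:ℤ) by ring, zpow_add, mul_assoc, this]
    rw [show (-1 + -(k:ℤ)) = (-(k:ℤ) - 1) by ring]
    simp

theorem t_add_mul (i k : ℤ) : L.t (i + k * β) = b ^ k * L.t i := by
  induction k using Int.induction_on with
  | zero => simp
  | succ k ih =>
    rw [add_mul, one_mul, ← add_assoc, L.t_add, ih, ← mul_assoc, zpow_add_one,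
      (Commute.self_zpow b k).eq]
  | pred k ih =>
    have := L.t_add (i + (-(k:ℤ) - 1) * β)
    rw [show i + (-(k:ℤ) - 1) * β + β = i + -(k:ℤ) * β by ring, ih] at this
    rw [show (-(k:ℤ) - 1) = -1 + -(k:ℤ) by ring, zpow_add, mul_assoc, this]
    rw [show (-1 + -(k:ℤ)) = (-(k:ℤ) - 1) by ring]
    simp

theorem x_add_mul (i k : ℤ) : L.x (i + k * β) = L.x i := by
  have hp : Function.Periodic L.x β := L.x_add
  exact hp.int_mul k i

end Line

/-- potentials on the Cayley tree -/
theorem exists_potential {k : Type} [AddCommGroup k] (f : FreeGroup α → α → k) :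
    ∃ Φ : FreeGroup α → k, Φ 1 = 0 ∧ ∀ u x, Φ (u * FreeGroup.of x) = Φ u + f u x := by
  let π : FreeGroup α →* Equiv.Perm (FreeGroup α × k) := FreeGroup.lift fun x =>
    { toFun := fun s => (s.1 * (FreeGroup.of x)⁻¹, s.2 - f (s.1 * (FreeGroup.of x)⁻¹) x)
      invFun := fun s => (s.1 * FreeGroup.of x, s.2 + f s.1 x)
      left_inv := by intro s; simp
      right_inv := by intro s; simp }
  have hπ : ∀ x s, (π (FreeGroup.of x))⁻¹ s = (s.1 * FreeGroup.of x, s.2 + f s.1 x) := by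
    intro x s
    simp only [π, FreeGroup.lift_apply_of]
    rfl
  have hfst : ∀ g : FreeGroup α, ∀ s, (π g s).1 = s.1 * g⁻¹ := by
    intro g
    induction g using FreeGroup.induction_on with
    | C1 => intro s; simp
    | of x => intro s; simp [π]
    | inv_of x _ => intro s; rw [map_inv, hπ]; simp
    | mul x y h1 h2 => intro s; rw [map_mul, Equiv.Perm.mul_apply, h1, h2]; group
  refine ⟨fun g => (π g⁻¹ (1, 0)).2, by simp, fun u x => ?_⟩
  have e1 : (π u⁻¹ (1, 0)).1 = u := by rw [hfst]; simp
  simp only [mul_inv_rev, map_mul, Equiv.Perm.mul_apply]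
  rw [map_inv, hπ]
  simp only [e1]

theorem potential_const {k : Type} (Ψ : FreeGroup α → k)
    (h : ∀ u x, Ψ (u * FreeGroup.of x) = Ψ u) (u : FreeGroup α) : Ψ u = Ψ 1 := by
  have : ∀ g : FreeGroup α, ∀ u, Ψ (u * g) = Ψ u := by
    intro g
    induction g using FreeGroup.induction_on with
    | C1 => intro s; simp
    | of x => intro s; exact h s x
    | inv_of x _ => intro s; rw [← h, inv_mul_cancel_right]
    | mul x y h1 h2 => intro s; rw [← mul_assoc, h2, h1]
  simpa using this u 1

theorem potential_unique {k : Type} [AddCommGroup k] (f : FreeGroup α → α → k)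
    (Φ Ψ : FreeGroup α → k) (hΦ : ∀ u x, Φ (u * FreeGroup.of x) = Φ u + f u x)
    (hΨ : ∀ u x, Ψ (u * FreeGroup.of x) = Ψ u + f u x) (h1 : Φ 1 = Ψ 1) : Φ = Ψ := by
  funext u
  have := potential_const (fun u => Φ u - Ψ u) (by intro u x; simp [hΦ, hΨ]) u
  simp only [h1, sub_self] at this
  exact sub_eq_zero.1 this

/-- twisted equivariance of potentials -/
theorem potential_equivariant {k : Type} [Ring k] (f : FreeGroup α → α → k)
    (Φ : FreeGroup α → k) (h0 : Φ 1 = 0) (hΦ : ∀ u x, Φ (u * FreeGroup.of x) = Φ u + f u x)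
    (h : FreeGroup α) (lam : k) (hf : ∀ u x, f (h * u) x = lam * f u x) (u : FreeGroup α) :
    Φ (h * u) = Φ h + lam * Φ u := by
  have := potential_const (fun u => Φ (h * u) - lam * Φ u) (by
    intro u x
    simp only [← mul_assoc, hΦ, hf, mul_add]
    abel) u
  simp only [h0, mul_one, mul_zero, sub_zero] at this
  rw [← this]; abel

/-- powers of `b` in `H` -/
theorem dvd_of_mem {a b c : FreeGroup α} (hac : ¬ Commute a c) {p q r : ℕ}
    (hp : 2 ≤ p) (hr : 2 ≤ r) (hq : 2 ≤ q) (h : a ^ p * b ^ q * c ^ r = 1) (k : ℤ)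
    (hk : b ^ k ∈ Subgroup.closure {a, c}) : (q : ℤ) ∣ k := by
  set H := Subgroup.closure {a, c} with hH
  have ha : a ∈ H := Subgroup.subset_closure (by simp)
  have hc : c ∈ H := Subgroup.subset_closure (by simp)
  have hW : b ^ q = (a ^ p)⁻¹ * (c ^ r)⁻¹ := by
    have h1 : b ^ q = (a ^ p)⁻¹ * (a ^ p * b ^ q * c ^ r) * (c ^ r)⁻¹ := by group
    rw [h, mul_one] at h1
    exact h1
  have hbq : b ^ q ∈ H := hW ▸ H.mul_mem (H.inv_mem (H.pow_mem ha p)) (H.inv_mem (H.pow_mem hc r))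
  have hg : b ^ ((Int.gcd (q : ℤ) k : ℕ) : ℤ) ∈ H := by
    rw [Int.gcd_eq_gcd_ab, zpow_add, zpow_mul, zpow_mul, zpow_natCast]
    exact H.mul_mem (H.zpow_mem hbq _) (H.zpow_mem hk _)
  set d := Int.gcd (q : ℤ) k with hd
  obtain ⟨m, hm⟩ : d ∣ q := by
    have := Int.gcd_dvd_left (q : ℤ) k
    exact_mod_cast this
  by_cases hm1 : m = 1
  · rw [hm1, mul_one] at hm
    rw [hm, hd]; exact Int.gcd_dvd_right _ _
  · exfalso
    have hm0 : m ≠ 0 := by rintro rfl; omega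
    refine not_proper_power hac H hH ha hc hp hr (m := m) (by omega) ⟨_, hg⟩ ?_
    ext
    push_cast
    rw [zpow_natCast, ← pow_mul, ← hm, hW]

end LSProof

namespace LSProof

variable {α : Type}

theorem exists_top {ι : Type} (R : ι → ι → Prop) (s : Finset ι) (hs : s.Nonempty)
    (htot : ∀ x ∈ s, ∀ y ∈ s, R x y ∨ R y x)
    (htr : ∀ x ∈ s, ∀ y ∈ s, ∀ z ∈ s, R x y → R y z → R x z) :
    ∃ m ∈ s, ∀ x ∈ s, R x m := by
  classical
  induction hs using Finset.Nonempty.cons_induction with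
  | singleton a =>
    refine ⟨a, by simp, fun x hx => ?_⟩
    rw [Finset.mem_singleton] at hx
    subst hx
    exact (htot x (by simp) x (by simp)).elim id id
  | cons a s ha hs ih =>
    obtain ⟨m, hm, hm'⟩ := ih
      (fun x hx y hy => htot x (Finset.mem_cons_of_mem hx) y (Finset.mem_cons_of_mem hy))
      (fun x hx y hy z hz => htr x (Finset.mem_cons_of_mem hx) y (Finset.mem_cons_of_mem hy) z
        (Finset.mem_cons_of_mem hz))
    have ha' : a ∈ Finset.cons a s ha := Finset.mem_cons_self a s
    have hm1 : m ∈ Finset.cons a s ha := Finset.mem_cons_of_mem hm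
    rcases htot a ha' m hm1 with h | h
    · refine ⟨m, hm1, fun x hx => ?_⟩
      rcases Finset.mem_cons.1 hx with rfl | hx
      · exact h
      · exact hm' x hx
    · refine ⟨a, ha', fun x hx => ?_⟩
      rcases Finset.mem_cons.1 hx with rfl | hx'
      · exact (htot x ha' x ha').elim id id
      · exact htr x hx m hm1 a ha' (hm' x hx') h

theorem exists_order {b : FreeGroup α} {β : ℤ} (L : Line b β)
    (hb : ∀ g, Commute g b → g ∈ Subgroup.zpowers b) :
    ∃ PC : Set (FreeGroup α), (∀ x ∈ PC, ∀ y ∈ PC, x * y ∈ PC) ∧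
      (∀ k : ℤ, b ^ k ∈ PC) ∧ (∀ g, g ∈ PC → g⁻¹ ∈ PC → ∃ k : ℤ, g = b ^ k) ∧
      (∀ i j, L.v j * (L.v i)⁻¹ ∈ PC ∨ L.v i * (L.v j)⁻¹ ∈ PC) := by
  classical
  let I := Finset.Ico (0 : ℤ) β
  let S := ((I ×ˢ I).image (fun s => L.v s.2 * (L.v s.1)⁻¹)).filter
    (fun g => g ∉ Subgroup.zpowers b)
  obtain ⟨P, h1, h2, h3, h4⟩ := exists_pos hb S.card S le_rfl
    (fun s hs => (Finset.mem_filter.1 hs).2)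
  have hmul : ∀ x ∈ {x | x ∈ P ∨ x ∈ Subgroup.zpowers b},
      ∀ y ∈ {x | x ∈ P ∨ x ∈ Subgroup.zpowers b}, x * y ∈ {x | x ∈ P ∨ x ∈ Subgroup.zpowers b} := by
    rintro x (hx | hx) y (hy | hy)
    · exact Or.inl (h1 x hx y hy)
    · exact Or.inl (h2 y hy x hx).2
    · exact Or.inl (h2 x hx y hy).1
    · exact Or.inr (Subgroup.mul_mem _ hx hy)
  have hpow : ∀ k : ℤ, b ^ k ∈ {x | x ∈ P ∨ x ∈ Subgroup.zpowers b} := fun k => Or.inr ⟨k, rfl⟩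
  refine ⟨{x | x ∈ P ∨ x ∈ Subgroup.zpowers b}, hmul, hpow, ?_, ?_⟩
  · intro g hg hg'
    have : g ∈ Subgroup.zpowers b := by
      rcases hg with hg | hg
      · rcases hg' with hg' | hg'
        · exfalso
          have := h1 g hg _ hg'
          rw [mul_inv_cancel] at this
          exact h3 1 this (Subgroup.one_mem _)
        · simpa using Subgroup.inv_mem _ hg'
      · exact hg
    obtain ⟨k, hk⟩ := this
    exact ⟨k, hk.symm⟩
  · have key : ∀ i ∈ I, ∀ j ∈ I, L.v j * (L.v i)⁻¹ ∈ {x | x ∈ P ∨ x ∈ Subgroup.zpowers b} ∨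
        L.v i * (L.v j)⁻¹ ∈ {x | x ∈ P ∨ x ∈ Subgroup.zpowers b} := by
      intro i hi j hj
      by_cases hC : L.v j * (L.v i)⁻¹ ∈ Subgroup.zpowers b
      · exact Or.inl (Or.inr hC)
      · rcases h4 _ (Finset.mem_filter.2 ⟨Finset.mem_image.2 ⟨(i, j), by simp [hi, hj], rfl⟩, hC⟩)
          with h | h
        · exact Or.inl (Or.inl h)
        · right; left
          simpa using h
    intro i j
    have hi : i % β ∈ I := Finset.mem_Ico.2 ⟨Int.emod_nonneg i L.pos.ne', Int.emod_lt_of_pos i L.pos⟩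
    have hj : j % β ∈ I := Finset.mem_Ico.2 ⟨Int.emod_nonneg j L.pos.ne', Int.emod_lt_of_pos j L.pos⟩
    have e : ∀ i, L.v i = b ^ (i / β) * L.v (i % β) := by
      intro i
      rw [← L.v_add_mul, mul_comm, Int.emod_add_mul_ediv]
    have e2 : ∀ i j, L.v j * (L.v i)⁻¹ =
        b ^ (j / β) * (L.v (j % β) * (L.v (i % β))⁻¹) * b ^ (-(i / β)) := by
      intro i j
      rw [e i, e j]; group
    rw [e2 i j, e2 j i]
    rcases key _ hi _ hj with h | h
    · left; exact hmul _ (hmul _ (hpow _) _ h) _ (hpow _)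
    · right; exact hmul _ (hmul _ (hpow _) _ h) _ (hpow _)

theorem step_eq {b : FreeGroup α} {β : ℤ} (L : Line b β) {k : Type} [AddCommGroup k]
    (f : FreeGroup α → α → k) (Φ : FreeGroup α → k)
    (hΦ : ∀ u x, Φ (u * FreeGroup.of x) = Φ u + f u x) (i : ℤ) :
    f (L.t i) (L.x i) = Φ (L.v (i + 1)) - Φ (L.v i) ∨
    f (L.t i) (L.x i) = Φ (L.v i) - Φ (L.v (i + 1)) := by
  rcases L.edge i with ⟨h1, h2⟩ | ⟨h1, h2⟩
  · left; rw [h2, hΦ, ← h1]; abel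
  · right; rw [h2, hΦ, ← h1]; abel

/-- (ii) every edge of the quotient is traversed at least twice. -/
theorem two_visits {a b c : FreeGroup α} (hac : ¬ Commute a c) {p q r : ℕ}
    (hp : 2 ≤ p) (hr : 2 ≤ r) (hq : 2 ≤ q) (h : a ^ p * b ^ q * c ^ r = 1) {β : ℤ} (L : Line b β)
    (i : ℤ) : ∃ j, L.x j = L.x i ∧ L.t j * (L.t i)⁻¹ ∈ Subgroup.closure {a, c} ∧
      ¬ (q * β ∣ j - i) := by
  classical
  by_contra hcon
  push Not at hcon
  set H := Subgroup.closure {a, c} with hH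
  have ha : a ∈ H := Subgroup.subset_closure (by simp)
  have hc : c ∈ H := Subgroup.subset_closure (by simp)
  obtain ⟨ℓ, hℓ, -, u, hu⟩ := exists_field_unit (p * r) 0 (by positivity)
  have : Fact ℓ.Prime := ⟨hℓ⟩
  obtain ⟨ρ, hρa, hρc⟩ := exists_hom hac H hH ha hc (u ^ r) (u ^ p)
  have hup : u ^ (p * r) = 1 := by rw [← hu]; exact pow_orderOf_eq_one u
  have hne : ∀ n, 0 < n → n < p * r → u ^ n ≠ 1 := by
    intro n hn hn' h1
    have := orderOf_dvd_of_pow_eq_one h1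
    rw [hu] at this
    have := Nat.le_of_dvd hn this
    omega
  have hA1 : ρ ⟨a, ha⟩ ≠ 1 := by rw [hρa]; exact hne r (by omega) (by nlinarith)
  have hC1 : ρ ⟨c, hc⟩ ≠ 1 := by rw [hρc]; exact hne p (by omega) (by nlinarith)
  have hAp : ρ ⟨a, ha⟩ ^ p = 1 := by rw [hρa, ← pow_mul, mul_comm, hup]
  have hCr : ρ ⟨c, hc⟩ ^ r = 1 := by rw [hρc, ← pow_mul, hup]
  let f : FreeGroup α → α → ZMod ℓ := fun g y =>
    if hg : y = L.x i ∧ g * (L.t i)⁻¹ ∈ H then ((ρ ⟨g * (L.t i)⁻¹, hg.2⟩ : (ZMod ℓ)ˣ) : ZMod ℓ)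
    else 0
  have hf : ∀ g (hg : g ∈ H), ∀ z y, f (g * z) y = ((ρ ⟨g, hg⟩ : (ZMod ℓ)ˣ) : ZMod ℓ) * f z y := by
    intro g hg z y
    by_cases hz : y = L.x i ∧ z * (L.t i)⁻¹ ∈ H
    · have hgz : y = L.x i ∧ g * z * (L.t i)⁻¹ ∈ H :=
        ⟨hz.1, by rw [mul_assoc]; exact H.mul_mem hg hz.2⟩
      simp only [f, dif_pos hz, dif_pos hgz]
      rw [← Units.val_mul, ← map_mul]
      congr 2
      ext
      simp [mul_assoc]
    · have hgz : ¬ (y = L.x i ∧ g * z * (L.t i)⁻¹ ∈ H) := by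
        rintro ⟨h1, h2⟩
        refine hz ⟨h1, ?_⟩
        have := H.mul_mem (H.inv_mem hg) h2
        simpa [mul_assoc] using this
      simp only [f, dif_neg hz, dif_neg hgz, mul_zero]
  obtain ⟨Φ, h0, hΦ⟩ := exists_potential f
  have hΦm : ∀ g (hg : g ∈ H), ∀ z, Φ (g * z) = Φ g + ((ρ ⟨g, hg⟩ : (ZMod ℓ)ˣ) : ZMod ℓ) * Φ z :=
    fun g hg z => potential_equivariant f Φ h0 hΦ g _ (hf g hg) z
  have hpow : ∀ g (hg : g ∈ H) (n : ℕ), ρ ⟨g, hg⟩ ≠ 1 → ρ ⟨g, hg⟩ ^ n = 1 → Φ (g ^ n) = 0 := by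
    intro g hg n h1 h2
    have hsum : ∀ k : ℕ, Φ (g ^ k) =
        (∑ m ∈ Finset.range k, ((ρ ⟨g, hg⟩ : (ZMod ℓ)ˣ) : ZMod ℓ) ^ m) * Φ g := by
      intro k
      induction k with
      | zero => simp [h0]
      | succ k ih => rw [pow_succ', hΦm g hg, ih, geom_sum_succ]; ring
    rw [hsum]
    have h3 := geom_sum_mul ((ρ ⟨g, hg⟩ : (ZMod ℓ)ˣ) : ZMod ℓ) n
    rw [← Units.val_pow_eq_pow_val, h2, Units.val_one, sub_self] at h3
    rcases mul_eq_zero.1 h3 with h4 | h4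
    · rw [h4, zero_mul]
    · exact absurd (Units.ext (by simpa using sub_eq_zero.1 h4)) h1
  have hΦa := hpow a ha p hA1 hAp
  have hΦc := hpow c hc r hC1 hCr
  have hap : a ^ p ∈ H := H.pow_mem ha p
  have hcr : c ^ r ∈ H := H.pow_mem hc r
  have hW : b ^ q = (a ^ p)⁻¹ * (c ^ r)⁻¹ := by
    have h1 : b ^ q = (a ^ p)⁻¹ * (a ^ p * b ^ q * c ^ r) * (c ^ r)⁻¹ := by group
    rw [h, mul_one] at h1
    exact h1
  have hbq : b ^ q ∈ H := hW ▸ H.mul_mem (H.inv_mem hap) (H.inv_mem hcr)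
  have hρap : ρ ⟨a ^ p, hap⟩ = 1 := by
    have : (⟨a ^ p, hap⟩ : H) = ⟨a, ha⟩ ^ p := rfl
    rw [this, map_pow, hAp]
  have hρcr : ρ ⟨c ^ r, hcr⟩ = 1 := by
    have : (⟨c ^ r, hcr⟩ : H) = ⟨c, hc⟩ ^ r := rfl
    rw [this, map_pow, hCr]
  have hρb : ρ ⟨b ^ q, hbq⟩ = 1 := by
    have : (⟨b ^ q, hbq⟩ : H) = ⟨a ^ p, hap⟩⁻¹ * ⟨c ^ r, hcr⟩⁻¹ := by ext; simp [hW]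
    rw [this, map_mul, map_inv, map_inv, hρap, hρcr]; simp
  have hΦb : Φ (b ^ q) = 0 := by
    have e1 := hΦm (a ^ p) hap (b ^ q * c ^ r)
    rw [← mul_assoc, h, h0, hΦa, hρap, hΦm _ hbq, hΦc] at e1
    simpa using e1.symm
  have hqβ : 0 < (q : ℤ) * β := by have := L.pos; positivity
  have hend : Φ (L.v (i + q * β)) = Φ (L.v i) := by
    rw [L.v_add_mul, zpow_natCast, hΦm _ hbq, hρb, hΦb]; simp
  have hmid : ∀ n : ℕ, (n : ℤ) + 1 ≤ q * β → Φ (L.v (i + 1 + n)) = Φ (L.v (i + 1)) := by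
    intro n
    induction n with
    | zero => simp
    | succ n ih =>
      intro hn
      push_cast at hn
      have ih' := ih (by omega)
      have hz : f (L.t (i + 1 + n)) (L.x (i + 1 + n)) = 0 := by
        simp only [f]
        rw [dif_neg]
        rintro ⟨h1, h2⟩
        have := hcon _ h1 h2
        rw [show i + 1 + (n : ℤ) - i = n + 1 by ring] at this
        have := Int.le_of_dvd (by omega) this
        omega
      rw [← ih']
      push_cast
      rw [← add_assoc]
      rcases step_eq L f Φ hΦ (i + 1 + n) with h1 | h1
      · rw [hz] at h1; exact sub_eq_zero.1 h1.symm
      · rw [hz] at h1; exact (sub_eq_zero.1 h1.symm).symm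
  have hlast := hmid ((q * β - 1).toNat) (by omega)
  rw [show i + 1 + ((q * β - 1).toNat : ℤ) = i + q * β by omega, hend] at hlast
  have hone : f (L.t i) (L.x i) = 1 := by
    have h1 : L.x i = L.x i ∧ L.t i * (L.t i)⁻¹ ∈ H := ⟨rfl, by simp⟩
    refine (dif_pos h1).trans ?_
    have : (⟨L.t i * (L.t i)⁻¹, h1.2⟩ : H) = 1 := by ext; simp
    rw [this]; simp
  rcases step_eq L f Φ hΦ i with h1 | h1 <;> rw [hone, hlast, sub_self] at h1 <;>
    exact one_ne_zero h1

/-- edge classes -/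
def eS {b : FreeGroup α} {β : ℤ} (L : Line b β) (H : Subgroup (FreeGroup α)) : Setoid ℤ where
  r i j := L.x j = L.x i ∧ L.t j * (L.t i)⁻¹ ∈ H
  iseqv := ⟨fun i => ⟨rfl, by simp⟩,
    fun {i j} h => ⟨h.1.symm, by simpa using H.inv_mem h.2⟩,
    fun {i j k} h1 h2 => ⟨h2.1.trans h1.1, by simpa [mul_assoc] using H.mul_mem h2.2 h1.2⟩⟩

/-- vertex classes -/
def vS {b : FreeGroup α} {β : ℤ} (L : Line b β) (H : Subgroup (FreeGroup α)) : Setoid ℤ where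
  r i j := L.v j * (L.v i)⁻¹ ∈ H
  iseqv := ⟨fun i => by simp,
    fun {i j} h => by simpa using H.inv_mem h,
    fun {i j k} h1 h2 => by simpa [mul_assoc] using H.mul_mem h2 h1⟩

/-- (i) Euler characteristic bound -/
theorem euler_bound {a b c : FreeGroup α} {β : ℤ} (L : Line b β) (H : Subgroup (FreeGroup α))
    (hH : H = Subgroup.closure {a, c})
    [Finite (Quotient (eS L H))] [Finite (Quotient (vS L H))] :
    Nat.card (Quotient (eS L H)) ≤ Nat.card (Quotient (vS L H)) + 1 := by
  classical
  have := Fintype.ofFinite (Quotient (eS L H))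
  have := Fintype.ofFinite (Quotient (vS L H))
  let E := Quotient (eS L H)
  let f : FreeGroup α → α → (E → ℚ) := fun g y =>
    if hg : ∃ i, L.x i = y ∧ g * (L.t i)⁻¹ ∈ H then Pi.single (Quotient.mk (eS L H) hg.choose) 1
    else 0
  have hf1 : ∀ g y i, L.x i = y → g * (L.t i)⁻¹ ∈ H →
      f g y = Pi.single (Quotient.mk (eS L H) i) 1 := by
    intro g y i h1 h2
    have hg : ∃ i, L.x i = y ∧ g * (L.t i)⁻¹ ∈ H := ⟨i, h1, h2⟩
    simp only [f]
    rw [dif_pos hg]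
    have hs := hg.choose_spec
    have : Quotient.mk (eS L H) hg.choose = Quotient.mk (eS L H) i := by
      apply Quotient.sound
      refine ⟨h1.trans hs.1.symm, ?_⟩
      have := H.mul_mem (H.inv_mem h2) hs.2
      simpa [mul_assoc] using this
    rw [this]
  have hf : ∀ g ∈ H, ∀ z y, f (g * z) y = 1 * f z y := by
    intro g hg z y
    rw [one_mul]
    by_cases hz : ∃ i, L.x i = y ∧ z * (L.t i)⁻¹ ∈ H
    · obtain ⟨i, h1, h2⟩ := hz
      rw [hf1 z y i h1 h2, hf1 (g * z) y i h1 (by rw [mul_assoc]; exact H.mul_mem hg h2)]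
    · have hgz : ¬ ∃ i, L.x i = y ∧ g * z * (L.t i)⁻¹ ∈ H := by
        rintro ⟨i, h1, h2⟩
        refine hz ⟨i, h1, ?_⟩
        have := H.mul_mem (H.inv_mem hg) h2
        simpa [mul_assoc] using this
      simp only [f]
      rw [dif_neg hz, dif_neg hgz]
  obtain ⟨Φ, h0, hΦ⟩ := exists_potential f
  have hΦm : ∀ g ∈ H, ∀ z, Φ (g * z) = Φ g + Φ z := by
    intro g hg z
    have := potential_equivariant f Φ h0 hΦ g 1 (hf g hg) z
    rwa [one_mul] at this
  let S : Finset (E → ℚ) := {Φ a, Φ c} ∪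
    ((Finset.univ.erase (Quotient.mk (vS L H) 0)).image (fun s => Φ (L.v s.out)))
  have hcard : S.card ≤ Fintype.card (Quotient (vS L H)) + 1 := by
    refine (Finset.card_union_le _ _).trans ?_
    have h1 : ({Φ a, Φ c} : Finset (E → ℚ)).card ≤ 2 := Finset.card_le_two
    have h2 := Finset.card_image_le (s := Finset.univ.erase (Quotient.mk (vS L H) 0))
      (f := fun s => Φ (L.v s.out))
    rw [Finset.card_erase_of_mem (Finset.mem_univ _), Finset.card_univ] at h2
    have h3 : 0 < Fintype.card (Quotient (vS L H)) := Fintype.card_pos_iff.2 ⟨Quotient.mk _ 0⟩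
    omega
  have ha : a ∈ H := hH ▸ Subgroup.subset_closure (by simp)
  have hc : c ∈ H := hH ▸ Subgroup.subset_closure (by simp)
  have hHs : ∀ g ∈ H, Φ g ∈ Submodule.span ℚ (S : Set (E → ℚ)) := by
    intro g hg
    have hg' : g ∈ Subgroup.closure {a, c} := hH ▸ hg
    have : g ∈ H ∧ Φ g ∈ Submodule.span ℚ (S : Set (E → ℚ)) := by
      induction hg' using Subgroup.closure_induction with
      | mem x hx =>
        rcases hx with rfl | rfl
        · exact ⟨ha, Submodule.subset_span (by simp [S])⟩
        · exact ⟨hc, Submodule.subset_span (by simp [S])⟩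
      | one => exact ⟨H.one_mem, by rw [h0]; exact Submodule.zero_mem _⟩
      | mul x y hx hy i1 i2 =>
        obtain ⟨hx', i1⟩ := i1 (hH ▸ hx)
        obtain ⟨hy', i2⟩ := i2 (hH ▸ hy)
        exact ⟨H.mul_mem hx' hy', by rw [hΦm x hx']; exact Submodule.add_mem _ i1 i2⟩
      | inv x hx i1 =>
        obtain ⟨hx', i1⟩ := i1 (hH ▸ hx)
        refine ⟨H.inv_mem hx', ?_⟩
        have := hΦm x hx' x⁻¹
        rw [mul_inv_cancel, h0] at this
        rw [← neg_eq_of_add_eq_zero_right this.symm]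
        exact Submodule.neg_mem _ i1
    exact this.2
  have hvs : ∀ i, Φ (L.v i) ∈ Submodule.span ℚ (S : Set (E → ℚ)) := by
    intro i
    by_cases hi : Quotient.mk (vS L H) i = Quotient.mk (vS L H) 0
    · apply hHs
      have h1 : L.v 0 * (L.v i)⁻¹ ∈ H := Quotient.exact hi
      rw [L.v_zero, one_mul] at h1
      simpa using H.inv_mem h1
    · have h1 : L.v i * (L.v (Quotient.mk (vS L H) i).out)⁻¹ ∈ H :=
        Quotient.exact (Quotient.out_eq (Quotient.mk (vS L H) i))
      have h2 := hΦm _ h1 (L.v (Quotient.mk (vS L H) i).out)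
      rw [inv_mul_cancel_right] at h2
      rw [h2]
      refine Submodule.add_mem _ (hHs _ h1) (Submodule.subset_span ?_)
      simp only [S, Finset.coe_union]
      right
      exact Finset.mem_coe.2 (Finset.mem_image.2 ⟨_, Finset.mem_erase.2 ⟨hi, Finset.mem_univ _⟩, rfl⟩)
  have htop : Submodule.span ℚ (S : Set (E → ℚ)) = ⊤ := by
    rw [eq_top_iff, ← (Pi.basisFun ℚ E).span_eq, Submodule.span_le]
    rintro _ ⟨e, rfl⟩
    induction e using Quotient.inductionOn with
    | h i =>
      have h1 := hf1 (L.t i) (L.x i) i rfl (by simp)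
      rw [Pi.basisFun_apply, ← h1]
      rcases step_eq L f Φ hΦ i with h2 | h2 <;> rw [h2] <;>
        exact Submodule.sub_mem _ (hvs _) (hvs _)
  have hfin := finrank_span_finset_le_card (R := ℚ) S
  rw [Set.finrank, htop, finrank_top, Module.finrank_fintype_fun_eq_card] at hfin
  rw [Nat.card_eq_fintype_card, Nat.card_eq_fintype_card]
  exact hfin.trans hcard

end LSProof

namespace LSProof

variable {α : Type}

theorem core {a b c : FreeGroup α} (hac : ¬ Commute a c) {p q r : ℕ}
    (hp : 2 ≤ p) (hr : 2 ≤ r) (hq : 2 ≤ q) (h : a ^ p * b ^ q * c ^ r = 1) {β : ℤ} (L : Line b β)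
    (hb : ∀ g, Commute g b → g ∈ Subgroup.zpowers b) : False := by
  classical
  obtain ⟨PC, hmul, hpow, hanti, htot⟩ := exists_order L hb
  obtain ⟨H, hH⟩ : ∃ H, H = Subgroup.closure {a, c} := ⟨_, rfl⟩
  have ha : a ∈ H := hH ▸ Subgroup.subset_closure (by simp)
  have hc : c ∈ H := hH ▸ Subgroup.subset_closure (by simp)
  have hdvd : ∀ k : ℤ, b ^ k ∈ H → (q : ℤ) ∣ k := fun k hk =>
    dvd_of_mem hac hp hr hq h k (hH ▸ hk)
  have hbq : b ^ q ∈ H := by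
    have h1 : b ^ q = (a ^ p)⁻¹ * (a ^ p * b ^ q * c ^ r) * (c ^ r)⁻¹ := by group
    rw [h, mul_one] at h1
    rw [h1]
    exact H.mul_mem (H.inv_mem (H.pow_mem ha p)) (H.inv_mem (H.pow_mem hc r))
  have hbqz : ∀ k : ℤ, b ^ (k * q) ∈ H := by
    intro k
    rw [mul_comm, zpow_mul, zpow_natCast]
    exact H.zpow_mem hbq k
  have two := fun i => two_visits hac hp hr hq h L i
  rw [← hH] at two
  set N : ℤ := q * β with hN
  have hβ := L.pos
  have hq' : (2 : ℤ) ≤ q := by exact_mod_cast hq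
  have h2β : 2 * β ≤ N := by rw [hN]; nlinarith
  have hN0 : 0 < N := by linarith
  have hvN : ∀ i k, L.v (i + k * N) = b ^ (k * q) * L.v i := by
    intro i k; rw [← L.v_add_mul, hN]; ring_nf
  have htN : ∀ i k, L.t (i + k * N) = b ^ (k * q) * L.t i := by
    intro i k; rw [← L.t_add_mul, hN]; ring_nf
  have hxN : ∀ i k, L.x (i + k * N) = L.x i := by
    intro i k; rw [hN, ← mul_assoc]; exact L.x_add_mul i (k * q)
  have hmod : ∀ i : ℤ, i % N + i / N * N = i := by
    intro i; rw [mul_comm]; exact Int.emod_add_mul_ediv i N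
  have hmodI : ∀ i : ℤ, i % N ∈ Finset.Ico 0 N := fun i =>
    Finset.mem_Ico.2 ⟨Int.emod_nonneg i hN0.ne', Int.emod_lt_of_pos i hN0⟩
  have heq : ∀ i, Quotient.mk (eS L H) (i % N) = Quotient.mk (eS L H) i := by
    intro i
    apply Quotient.sound
    have h1 := hxN (i % N) (i / N)
    have h2 := htN (i % N) (i / N)
    rw [hmod] at h1 h2
    exact ⟨h1, by rw [h2, mul_inv_cancel_right]; exact hbqz _⟩
  have hveq : ∀ i, Quotient.mk (vS L H) (i % N) = Quotient.mk (vS L H) i := by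
    intro i
    apply Quotient.sound
    have h2 := hvN (i % N) (i / N)
    rw [hmod] at h2
    show L.v i * (L.v (i % N))⁻¹ ∈ H
    rw [h2, mul_inv_cancel_right]; exact hbqz _
  have fE : Finite (Quotient (eS L H)) := by
    refine Finite.of_surjective (fun k : Finset.Ico (0:ℤ) N => Quotient.mk (eS L H) k.1) ?_
    intro e
    induction e using Quotient.inductionOn with
    | h i => exact ⟨⟨i % N, hmodI i⟩, heq i⟩
  have fV : Finite (Quotient (vS L H)) := by
    refine Finite.of_surjective (fun k : Finset.Ico (0:ℤ) N => Quotient.mk (vS L H) k.1) ?_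
    intro e
    induction e using Quotient.inductionOn with
    | h i => exact ⟨⟨i % N, hmodI i⟩, hveq i⟩
  have heuler := euler_bound L H hH
  let TE : ℤ → Prop := fun i => ∀ j, L.x j = L.x i → L.t j * (L.t i)⁻¹ ∈ H → L.t j * (L.t i)⁻¹ ∈ PC
  let TV : ℤ → Prop := fun i => ∀ j, L.v j * (L.v i)⁻¹ ∈ H → L.v j * (L.v i)⁻¹ ∈ PC
  have hTVE : ∀ i, TV i → TE i := by
    intro i hi j hx hj
    obtain ⟨k, hk⟩ := L.t_v_left hx
    rw [hk] at hj ⊢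
    exact hi k hj
  have hTVE' : ∀ i, TV i → TE (i - 1) := by
    intro i hi j hx hj
    obtain ⟨k, hk⟩ := L.t_v_right hx
    rw [sub_add_cancel] at hk
    rw [hk] at hj ⊢
    exact hi k hj
  have huniq : ∀ i j, L.x j = L.x i → L.t j * (L.t i)⁻¹ ∈ H → L.t j * (L.t i)⁻¹ ∈ PC →
      L.t i * (L.t j)⁻¹ ∈ PC → N ∣ j - i := by
    intro i j hx hj h1 h2
    obtain ⟨k, hk⟩ := hanti _ h1 (by simpa using h2)
    obtain ⟨m, hm⟩ := hdvd k (hk ▸ hj)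
    have e1 : L.t j = L.t (i + k * β) := by
      rw [L.t_add_mul, ← hk, inv_mul_cancel_right]
    have := L.t_inj e1 (by rw [L.x_add_mul, hx])
    exact ⟨m, by rw [this, hm, hN]; ring⟩
  have hTEN : ∀ i, TE i → TE (i % N) := by
    intro i hi j hx hj
    have h1 := hxN (i % N) (i / N)
    have h2 := htN (i % N) (i / N)
    rw [hmod] at h1 h2
    have h3 : L.t j * (L.t (i % N))⁻¹ = L.t j * (L.t i)⁻¹ * b ^ (i / N * q) := by
      rw [h2]; group
    rw [h3] at hj ⊢
    refine hmul _ (hi j (hx.trans h1.symm) ?_) _ (hpow _)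
    have := H.mul_mem hj (H.inv_mem (hbqz (i / N)))
    rwa [mul_inv_cancel_right] at this
  have hTEN' : ∀ i k, TE (i + k * N) → TE i := by
    intro i k hi j hx hj
    have h1 := hxN i k
    have h2 := htN i k
    have h3 : L.t j * (L.t i)⁻¹ = L.t j * (L.t (i + k * N))⁻¹ * b ^ (k * q) := by
      rw [h2]; group
    rw [h3] at hj ⊢
    refine hmul _ (hi j (hx.trans h1.symm) ?_) _ (hpow _)
    have := H.mul_mem hj (H.inv_mem (hbqz k))
    rwa [mul_inv_cancel_right] at this
  let I := Finset.Ico (0 : ℤ) N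
  have hTEcard : (I.filter TE).card ≤ Nat.card (Quotient (eS L H)) := by
    have := Fintype.ofFinite (Quotient (eS L H))
    rw [Nat.card_eq_fintype_card, ← Finset.card_univ]
    refine Finset.card_le_card_of_injOn (fun i => Quotient.mk (eS L H) i) (by simp) ?_
    intro i hi j hj hij
    obtain ⟨hiI, hi⟩ := Finset.mem_filter.1 (Finset.mem_coe.1 hi)
    obtain ⟨hjI, hj⟩ := Finset.mem_filter.1 (Finset.mem_coe.1 hj)
    have h1 : L.x j = L.x i ∧ L.t j * (L.t i)⁻¹ ∈ H := Quotient.exact hij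
    have h2 : L.t i * (L.t j)⁻¹ ∈ H := by simpa using H.inv_mem h1.2
    have h3 := huniq i j h1.1 h1.2 (hi j h1.1 h1.2) (hj i h1.1.symm h2)
    rw [Finset.mem_Ico] at hiI hjI
    have := Int.eq_zero_of_abs_lt_dvd h3 (by rw [abs_lt]; constructor <;> linarith)
    omega
  have hTVcard : Nat.card (Quotient (vS L H)) ≤ (I.filter (fun i => TE i ∧ TE (i - 1))).card := by
    have := Fintype.ofFinite (Quotient (vS L H))
    rw [Nat.card_eq_fintype_card, ← Finset.card_univ]
    refine Finset.card_le_card_of_surjOn (fun i => Quotient.mk (vS L H) i) ?_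
    intro e _
    induction e using Quotient.inductionOn with
    | h i =>
      obtain ⟨m, hm, hm'⟩ := exists_top (fun x y => L.v x * (L.v y)⁻¹ ∈ PC)
        (I.filter (fun j => Quotient.mk (vS L H) j = Quotient.mk (vS L H) i))
        ⟨i % N, Finset.mem_filter.2 ⟨hmodI i, hveq i⟩⟩
        (fun x _ y _ => htot y x)
        (fun x _ y _ z _ h1 h2 => by simpa [mul_assoc] using hmul _ h1 _ h2)
      obtain ⟨hmI, hmi⟩ := Finset.mem_filter.1 hm
      have hTVm : TV m := by
        intro j hj
        have hjm : Quotient.mk (vS L H) m = Quotient.mk (vS L H) j := Quotient.sound hj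
        have h1 := hm' (j % N) (Finset.mem_filter.2 ⟨hmodI j, by rw [hveq, ← hjm, hmi]⟩)
        have h2 := hvN (j % N) (j / N)
        rw [hmod] at h2
        rw [h2, mul_assoc]
        exact hmul _ (hpow _) _ h1
      exact ⟨m, Finset.mem_coe.2 (Finset.mem_filter.2 ⟨hmI, hTVE m hTVm, hTVE' m hTVm⟩), hmi⟩
  have hA : (I.filter (fun i => TE i ∧ ¬ TE (i - 1))).card ≤ 1 := by
    have h1 := Finset.card_filter_add_card_filter_not (s := I.filter TE) (fun i => TE (i - 1))
    rw [Finset.filter_filter, Finset.filter_filter] at h1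
    omega
  -- extreme positions
  have httot : ∀ i j, L.x i = L.x 0 → L.x j = L.x 0 →
      L.t i * (L.t j)⁻¹ ∈ PC ∨ L.t j * (L.t i)⁻¹ ∈ PC := by
    intro i j hi hj
    obtain ⟨k, hk⟩ := L.t_v_left (hi.trans hj.symm)
    have hk' : L.t j * (L.t i)⁻¹ = L.v j * (L.v k)⁻¹ := by
      have := congrArg (fun g => g⁻¹) hk
      simpa using this
    rw [hk, hk']
    exact htot j k
  have hJ : ∀ j : ℤ, L.x j = L.x 0 →
      j % β ∈ (Finset.Ico (0 : ℤ) β).filter (fun j => L.x j = L.x 0) := by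
    intro j hj
    refine Finset.mem_filter.2 ⟨Finset.mem_Ico.2 ⟨Int.emod_nonneg j hβ.ne',
      Int.emod_lt_of_pos j hβ⟩, ?_⟩
    rw [← hj, ← L.x_add_mul (j % β) (j / β), mul_comm, Int.emod_add_mul_ediv]
  have hJt : ∀ j : ℤ, L.t j = b ^ (j / β) * L.t (j % β) := by
    intro j
    rw [← L.t_add_mul, mul_comm, Int.emod_add_mul_ediv]
  obtain ⟨P, hP⟩ : ∃ P, L.x P = L.x 0 ∧ ∀ j, L.x j = L.x 0 → L.t j * (L.t P)⁻¹ ∈ PC := by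
    obtain ⟨P, hP, hP'⟩ := exists_top (fun x y => L.t x * (L.t y)⁻¹ ∈ PC) _ ⟨_, hJ 0 rfl⟩
      (fun x hx y hy => httot x y (Finset.mem_filter.1 hx).2 (Finset.mem_filter.1 hy).2)
      (fun x _ y _ z _ h1 h2 => by simpa [mul_assoc] using hmul _ h1 _ h2)
    refine ⟨P, (Finset.mem_filter.1 hP).2, fun j hj => ?_⟩
    rw [hJt j, mul_assoc]
    exact hmul _ (hpow _) _ (hP' _ (hJ j hj))
  obtain ⟨Q, hQ⟩ : ∃ Q, L.x Q = L.x 0 ∧ ∀ j, L.x j = L.x 0 → L.t Q * (L.t j)⁻¹ ∈ PC := by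
    obtain ⟨Q, hQ, hQ'⟩ := exists_top (fun x y => L.t y * (L.t x)⁻¹ ∈ PC) _ ⟨_, hJ 0 rfl⟩
      (fun x hx y hy => httot y x (Finset.mem_filter.1 hy).2 (Finset.mem_filter.1 hx).2)
      (fun x _ y _ z _ h1 h2 => by simpa [mul_assoc] using hmul _ h2 _ h1)
    refine ⟨Q, (Finset.mem_filter.1 hQ).2, fun j hj => ?_⟩
    rw [hJt j, mul_inv_rev, ← zpow_neg, ← mul_assoc]
    exact hmul _ (hQ' _ (hJ j hj)) _ (hpow _)
  have hPk : ∀ k : ℤ, TE (P + k * β) := by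
    intro k j hx _
    rw [L.t_add_mul, mul_inv_rev, ← zpow_neg, ← mul_assoc]
    exact hmul _ (hP.2 j (by rw [hx, L.x_add_mul, hP.1])) _ (hpow _)
  have hQk : ∀ k : ℤ, ¬ TE (Q + k * β) := by
    intro k hk
    obtain ⟨j, h1, h2, h3⟩ := two (Q + k * β)
    refine h3 (huniq _ j h1 h2 (hk j h1 h2) ?_)
    rw [L.t_add_mul, mul_assoc]
    exact hmul _ (hpow _) _ (hQ.2 j (by rw [h1, L.x_add_mul, hQ.1]))
  have harc : ∀ k : ℤ, ∃ i, Q + k * β < i ∧ i ≤ Q + k * β + β ∧ TE i ∧ ¬ TE (i - 1) := by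
    intro k
    have hex : ∃ n : ℕ, (n : ℤ) < β ∧ TE (Q + k * β + n) := by
      refine ⟨((P - (Q + k * β)) % β).toNat, by
        have := Int.emod_lt_of_pos (P - (Q + k * β)) hβ
        omega, ?_⟩
      have h1 := Int.emod_nonneg (P - (Q + k * β)) hβ.ne'
      have h2 := Int.emod_add_mul_ediv (P - (Q + k * β)) β
      have h3 := hPk (-((P - (Q + k * β)) / β))
      rw [Int.toNat_of_nonneg h1]
      convert h3 using 1
      linarith
    have hs := Nat.find_spec hex
    have hn0 : Nat.find hex ≠ 0 := by
      intro h0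
      rw [h0] at hs
      exact hQk k (by simpa using hs.2)
    refine ⟨Q + k * β + Nat.find hex, by omega, by omega, hs.2, fun h1 => ?_⟩
    refine Nat.find_min hex (m := Nat.find hex - 1) (by omega) ⟨by omega, ?_⟩
    convert h1 using 1
    push_cast [Nat.one_le_iff_ne_zero.2 hn0]
    ring
  obtain ⟨i1, h11, h12, h13, h14⟩ := harc 0
  obtain ⟨i2, h21, h22, h23, h24⟩ := harc 1
  have hmem : ∀ i, TE i → ¬ TE (i - 1) → i % N ∈ I.filter (fun i => TE i ∧ ¬ TE (i - 1)) := by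
    intro i h1 h2
    refine Finset.mem_filter.2 ⟨hmodI i, hTEN i h1, fun h3 => h2 ?_⟩
    apply hTEN' (i - 1) (-(i / N))
    convert h3 using 1
    linarith [hmod i]
  have := Finset.card_le_one.1 hA _ (hmem i1 h13 h14) _ (hmem i2 h23 h24)
  have hd : N ∣ i2 - i1 := Int.ModEq.dvd this
  have := Int.le_of_dvd (by linarith) hd
  linarith

theorem main_commute {a b c : FreeGroup α} {p q r : ℕ}
    (hp : 2 ≤ p) (hq : 2 ≤ q) (hr : 2 ≤ r) (h : a ^ p * b ^ q * c ^ r = 1) : Commute a c := by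
  classical
  by_contra hac
  have hb1 : b ≠ 1 := by
    rintro rfl
    rw [one_pow, mul_one] at h
    apply hac
    refine commute_of_pow (n := p) (by omega) ?_
    rw [eq_inv_of_mul_eq_one_left h]
    exact ((Commute.refl c).pow_left r).inv_left
  obtain ⟨b₀, m, hm, hb, hroot⟩ := exists_root hb1
  have hb0 : b₀ ≠ 1 := by rintro rfl; simp at hb; exact hb1 hb
  set w := FreeGroup.reduceCyclically b₀.toWord with hw
  set g := FreeGroup.mk (FreeGroup.reduceCyclically.conjugator b₀.toWord) with hg
  have hconj : g * FreeGroup.mk w * g⁻¹ = b₀ := by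
    rw [hg, hw, FreeGroup.inv_mk, FreeGroup.mul_mk, FreeGroup.mul_mk,
      FreeGroup.reduceCyclically.conj_conjugator_reduceCyclically, FreeGroup.mk_toWord]
  have hwne : w ≠ [] := by
    intro h0
    rw [h0, ← FreeGroup.one_eq_mk] at hconj
    apply hb0
    rw [← hconj]; simp
  have hwc : FreeGroup.IsCyclicallyReduced w :=
    FreeGroup.reduceCyclically.isCyclicallyReduced FreeGroup.isReduced_toWord
  obtain ⟨β, ⟨L⟩⟩ := exists_line w hwc hwne
  have hmk : FreeGroup.mk w = g⁻¹ * b₀ * g := by rw [← hconj]; group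
  have hcj : ∀ (z : FreeGroup α) (n : ℕ), (g⁻¹ * z * g) ^ n = g⁻¹ * z ^ n * g := by
    intro z n
    have := conj_pow (i := n) (a := g⁻¹) (b := z)
    rwa [inv_inv] at this
  refine core (a := g⁻¹ * a * g) (c := g⁻¹ * c * g) (p := p) (q := m * q) (r := r) ?_ hp hr
    (by nlinarith) ?_ L ?_
  · intro h1
    apply hac
    have h2 : (g⁻¹ * a * g) * (g⁻¹ * c * g) = (g⁻¹ * c * g) * (g⁻¹ * a * g) := h1
    have h3 : g⁻¹ * (a * c) * g = g⁻¹ * (c * a) * g := by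
      calc g⁻¹ * (a * c) * g = (g⁻¹ * a * g) * (g⁻¹ * c * g) := by group
        _ = _ := h2
        _ = _ := by group
    exact mul_left_cancel (mul_right_cancel h3)
  · rw [hmk, hcj, hcj, hcj, pow_mul, ← hb]
    calc g⁻¹ * a ^ p * g * (g⁻¹ * b ^ q * g) * (g⁻¹ * c ^ r * g)
        = g⁻¹ * (a ^ p * b ^ q * c ^ r) * g := by group
      _ = 1 := by rw [h]; group
  · intro z hz
    have h1 : z * (g⁻¹ * b₀ * g) = (g⁻¹ * b₀ * g) * z := by rw [← hmk]; exact hz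
    obtain ⟨k, hk⟩ := hroot (g * z * g⁻¹) (by
      show g * z * g⁻¹ * b₀ = b₀ * (g * z * g⁻¹)
      calc g * z * g⁻¹ * b₀ = g * (z * (g⁻¹ * b₀ * g)) * g⁻¹ := by group
        _ = _ := by rw [h1]; group)
    refine ⟨k, ?_⟩
    have h2 : b₀ ^ k = g * z * g⁻¹ := hk
    have h3 : (g⁻¹ * b₀ * g) ^ k = g⁻¹ * b₀ ^ k * g := by
      have := conj_zpow (i := k) (a := g⁻¹) (b := b₀)
      rwa [inv_inv] at this
    show FreeGroup.mk w ^ k = z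
    rw [hmk, h3, h2]; group

end LSProof

/-- Lyndon–Schützenberger: if `aᵖ bᑫ cʳ = 1` in a free group with `p, q, r ≥ 2`,
then `a`, `b`, `c` pairwise commute. -/
theorem lyndon_schutzenberger {α : Type} (a b c : FreeGroup α) (p q r : ℕ)
    (hp : 2 ≤ p) (hq : 2 ≤ q) (hr : 2 ≤ r)
    (h : a ^ p * b ^ q * c ^ r = 1) :
    a * b = b * a ∧ b * c = c * b ∧ a * c = c * a := by
  have h1 : b ^ q * c ^ r * a ^ p = 1 := by
    rw [mul_eq_one_iff_eq_inv, eq_inv_iff_mul_eq_one] at *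
    have h2 : a ^ p * (b ^ q * c ^ r) = 1 := by rw [← mul_assoc]; exact h
    exact mul_eq_one_comm.1 h2
  have h3 : c ^ r * a ^ p * b ^ q = 1 := by
    rw [mul_assoc]
    exact mul_eq_one_comm.1 h
  exact ⟨(LSProof.main_commute hq hr hp h1).symm.eq, (LSProof.main_commute hr hp hq h3).symm.eq,
    (LSProof.main_commute hp hq hr h).eq⟩
end

section
/- Shenitzer's theorem: if the amalgamated free product G = F₁ *_⟨t⟩ F₂ of two finitely generated free groups over an infinite cyclic subgroup ⟨t⟩ is itself free, then t is a basis element (primitive element) of F₁ or of F₂. -/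
/-- `x` is a basis (primitive) element of the group `F`: it belongs to some
free basis `s` of `F`, i.e. a subset such that the induced map
`FreeGroup s → F` is an isomorphism. -/
def IsBasisElem {F : Type} [Group F] (x : F) : Prop :=
  ∃ s : Set F, x ∈ s ∧ Function.Bijective ⇑(FreeGroup.lift (Subtype.val : s → F))

/-! ### Almost invariant sets and crossings -/

namespace Shen

section General

open Filter

variable {G : Type*} [Group G]

/-- almost invariant subsets of a group -/
def AI (A : Set G) : Prop := ∀ x : G, {g : G | ¬ (g ∈ A ↔ g * x ∈ A)}.Finite

/-- the ray `g * t ^ n` ends in `A` -/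
def EE (t : G) (A : Set G) (g : G) : Prop := ∀ᶠ n : ℕ in atTop, g * t ^ n ∈ A

/-- the line `g * t ^ n` crosses `A` -/
def Cross (t : G) (A : Set G) (g : G) : Prop := ¬ (EE t A g ↔ EE t⁻¹ A g)

/-- exactly one line crosses -/
def Single (t : G) (A : Set G) : Prop :=
  ∃ g₀, ∀ g, Cross t A g ↔ g₀⁻¹ * g ∈ Subgroup.zpowers t

lemma AI.compl {A : Set G} (h : AI A) : AI Aᶜ := by
  intro x
  refine (h x).subset ?_
  intro g hg
  simp only [Set.mem_ofPred_eq, Set.mem_compl_iff] at hg ⊢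
  tauto

lemma AI.union {A B : Set G} (h : AI A) (h' : AI B) : AI (A ∪ B) := by
  intro x
  refine ((h x).union (h' x)).subset ?_
  intro g hg
  simp only [Set.mem_ofPred_eq, Set.mem_union] at hg ⊢
  tauto

lemma AI.preimage {H : Type*} [Group H] {A : Set G} (h : AI A) (g : G) (f : H →* G)
    (hf : Function.Injective f) : AI {x : H | g * f x ∈ A} := by
  intro x
  have : Function.Injective (fun y : H => g * f y) := fun a b hab => hf (mul_left_cancel hab)
  refine ((h (f x)).preimage this.injOn).subset ?_
  intro y hy
  simpa [mul_assoc] using hy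

lemma evconst {A : Set G} (h : AI A) {t : G} (ht : ¬ IsOfFinOrder t) (g : G) :
    ∃ N, ∀ n ≥ N, (g * t ^ n ∈ A ↔ g * t ^ N ∈ A) := by
  have hinj : Function.Injective (fun n : ℕ => g * t ^ n) := fun a b hab =>
    injective_pow_iff_not_isOfFinOrder.2 ht (mul_left_cancel hab)
  have hfin := (h t).preimage hinj.injOn
  obtain ⟨N, hN⟩ := hfin.bddAbove
  refine ⟨N + 1, fun n hn => ?_⟩
  induction n, hn using Nat.le_induction with
  | base => rfl
  | succ n hn ih =>
    rw [← ih]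
    by_contra hc
    have : n ≤ N := hN (by
      simp only [Set.mem_preimage, Set.mem_ofPred_eq]
      rw [mul_assoc, ← pow_succ]
      tauto)
    omega

lemma EE_compl {A : Set G} (h : AI A) {t : G} (ht : ¬ IsOfFinOrder t) (g : G) :
    EE t Aᶜ g ↔ ¬ EE t A g := by
  obtain ⟨N, hN⟩ := evconst h ht g
  by_cases hm : g * t ^ N ∈ A
  · have h1 : EE t A g := eventually_atTop.2 ⟨N, fun n hn => (hN n hn).2 hm⟩
    refine iff_of_false ?_ (by simpa using h1)
    intro h2
    obtain ⟨n, hn⟩ := (h1.and h2).exists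
    exact hn.2 hn.1
  · have h1 : EE t Aᶜ g := eventually_atTop.2 ⟨N, fun n hn => fun hh => hm ((hN n hn).1 hh)⟩
    refine iff_of_true h1 ?_
    intro h2
    obtain ⟨n, hn⟩ := (h1.and h2).exists
    exact hn.1 hn.2

lemma EE_union {A B : Set G} (h : AI A) (h' : AI B) {t : G} (ht : ¬ IsOfFinOrder t) (g : G) :
    EE t (A ∪ B) g ↔ EE t A g ∨ EE t B g := by
  constructor
  · intro hu
    by_contra hc
    push Not at hc
    rw [← EE_compl h ht, ← EE_compl h' ht] at hc
    obtain ⟨n, hn⟩ := ((hc.1.and hc.2).and hu).exists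
    rcases hn with ⟨⟨h1, h2⟩, h3 | h3⟩
    · exact h1 h3
    · exact h2 h3
  · rintro (h1 | h1)
    · exact h1.mono fun n hn => Or.inl hn
    · exact h1.mono fun n hn => Or.inr hn

lemma EE_mono {A B : Set G} (h : A ⊆ B) {t : G} {g : G} (hA : EE t A g) : EE t B g :=
  hA.mono fun _ hn => h hn

lemma EE_disj {A B : Set G} (h : Disjoint A B) {t : G} {g : G} (hA : EE t A g) : ¬ EE t B g := by
  intro hB
  obtain ⟨n, hn⟩ := (hA.and hB).exists
  exact Set.disjoint_left.1 h hn.1 hn.2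

lemma Cross_compl {A : Set G} (h : AI A) {t : G} (ht : ¬ IsOfFinOrder t) (g : G) :
    Cross t Aᶜ g ↔ Cross t A g := by
  unfold Cross
  rw [EE_compl h ht, EE_compl h (by simpa using ht)]
  tauto

lemma EE_shift (t : G) (A : Set G) (g : G) : EE t A (g * t) ↔ EE t A g := by
  unfold EE
  have : (fun n : ℕ => g * t * t ^ n ∈ A) = fun n : ℕ => g * t ^ (n + 1) ∈ A := by
    funext n
    rw [pow_succ', mul_assoc]
  rw [this]
  conv_rhs => rw [← map_add_atTop_eq_nat 1]
  rw [eventually_map]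

lemma EE_shift' (t : G) (A : Set G) (g : G) : EE t⁻¹ A (g * t) ↔ EE t⁻¹ A g := by
  rw [← EE_shift t⁻¹ A (g * t)]
  simp

lemma Cross_shift (t : G) (A : Set G) (g : G) : Cross t A (g * t) ↔ Cross t A g := by
  unfold Cross
  rw [EE_shift, EE_shift']

lemma Cross_zpow (t : G) (A : Set G) (g : G) (k : ℤ) : Cross t A (g * t ^ k) ↔ Cross t A g := by
  induction k using Int.induction_on with
  | zero => simp
  | succ k ih => rw [← ih, zpow_add_one, ← mul_assoc, Cross_shift]
  | pred k ih => rw [← ih, ← Cross_shift, mul_assoc, ← zpow_add_one]; simp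

lemma Cross_coset {t : G} {A : Set G} {g g' : G} (h : g⁻¹ * g' ∈ Subgroup.zpowers t) :
    Cross t A g' ↔ Cross t A g := by
  obtain ⟨k, hk⟩ := h
  rw [← Cross_zpow t A g k]
  simp only at hk
  rw [hk]; simp

lemma Cross.exists_mem {t : G} {A : Set G} {g : G} (h : Cross t A g) :
    ∃ k : ℤ, g * t ^ k ∈ {g : G | ¬ (g ∈ A ↔ g * t ∈ A)} := by
  by_contra hc'
  have hc : ∀ k : ℤ, g * t ^ k ∈ A ↔ g * t ^ k * t ∈ A := by
    intro k
    by_contra hk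
    exact hc' ⟨k, hk⟩
  have hk : ∀ k : ℤ, g * t ^ k ∈ A ↔ g ∈ A := by
    intro k
    induction k using Int.induction_on with
    | zero => simp
    | succ k ih => rw [zpow_add_one, ← mul_assoc, ← hc, ih]
    | pred k ih =>
      rw [← ih, hc, mul_assoc, ← zpow_add_one]; simp
  apply h
  unfold EE
  have h1 : ∀ n : ℕ, g * t ^ n ∈ A ↔ g ∈ A := fun n => by simpa using hk n
  have h2 : ∀ n : ℕ, g * t⁻¹ ^ n ∈ A ↔ g ∈ A := fun n => by simpa using hk (-n)
  simp only [h1, h2]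

lemma Cross_preimage {H : Type*} [Group H] {A : Set G} (g : G) (f : H →* G) (t x : H) :
    Cross t {x : H | g * f x ∈ A} x ↔ Cross (f t) A (g * f x) := by
  unfold Cross EE
  simp [mul_assoc]

lemma Single.preimage_equiv {H : Type*} [Group H] {A : Set G} (g : G) (f : H ≃* G) (t : H)
    (h : Single (f t) A) : Single t {x : H | g * f x ∈ A} := by
  obtain ⟨g₀, hg⟩ := h
  refine ⟨f.symm (g⁻¹ * g₀), fun x => ?_⟩
  have := Cross_preimage (A := A) g f.toMonoidHom t x
  simp only [MulEquiv.toMonoidHom_eq_coe, MonoidHom.coe_coe] at this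
  rw [this, hg]
  simp only [Subgroup.mem_zpowers_iff]
  refine exists_congr fun k => ?_
  rw [← map_zpow, ← f.injective.eq_iff]
  simp [mul_assoc]

lemma Single.compl {A : Set G} (h : AI A) {t : G} (ht : ¬ IsOfFinOrder t) (hs : Single t A) :
    Single t Aᶜ := by
  obtain ⟨g₀, hg⟩ := hs
  exact ⟨g₀, fun g => by rw [Cross_compl h ht, hg]⟩

end General

section Amalgam

open Monoid

/-- The leaf argument in the Bass-Serre tree. -/
lemma exists_leaf {P : Bool → Type} [∀ b, Group (P b)] (t : ∀ b, P b)
    (htf : ∀ b, ¬ IsOfFinOrder (t b)) {G : Type} [Group G] (f : ∀ b, P b →* G)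
    (hf : f true (t true) = f false (t false))
    (φ : ∀ b, Multiplicative ℤ →* P b) (hφ : ∀ b k, φ b k = t b ^ k.toAdd)
    (θ : G →* PushoutI φ)
    (hθ : ∀ b x, θ (f b x) = PushoutI.of b x)
    {A : Set G} (hA : AI A) (g₁ : G) (hc : Cross (f true (t true)) A g₁) :
    ∃ b, ∃ B : Set (P b), AI B ∧ Single (t b) B := by
  classical
  have hφinj : ∀ b, Function.Injective (φ b) := by
    intro b
    have := injective_zpow_iff_not_isOfFinOrder.2 (htf b)
    intro x y hxy
    exact Multiplicative.toAdd.injective (this (by simpa [hφ] using hxy))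
  have hfinj : ∀ b, Function.Injective (f b) := by
    intro b x y hxy
    apply PushoutI.of_injective hφinj b
    rw [← hθ, ← hθ, hxy]
  have hrange : ∀ b x, x ∈ (φ b).range ↔ x ∈ Subgroup.zpowers (t b) := by
    intro b x
    rw [Subgroup.mem_zpowers_iff]
    constructor
    · rintro ⟨k, rfl⟩; exact ⟨k.toAdd, by simp [hφ]⟩
    · rintro ⟨k, rfl⟩; exact ⟨Multiplicative.ofAdd k, by simp [hφ]⟩
  set T : G := f true (t true) with hT
  have hTb : ∀ b, f b (t b) = T := by
    intro b; cases b
    · exact hf.symm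
    · rfl
  by_cases hleaf : ∃ g, Cross T A g ∧ ∃ b, ∀ x : P b, Cross T A (g * f b x) →
      x ∈ Subgroup.zpowers (t b)
  · obtain ⟨g, hg, b, hb⟩ := hleaf
    refine ⟨b, {x | g * f b x ∈ A}, hA.preimage g (f b) (hfinj b), 1, fun x => ?_⟩
    rw [Cross_preimage, hTb]
    simp only [inv_one, one_mul]
    refine ⟨hb x, ?_⟩
    rintro ⟨k, rfl⟩
    simp only [map_zpow, hTb]
    rwa [Cross_zpow]
  exfalso
  push Not at hleaf
  have hstep : ∀ (g : {g // Cross T A g}) (b : Bool), ∃ x : P b, Cross T A (g.1 * f b x) ∧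
      x ∉ Subgroup.zpowers (t b) := fun g b => hleaf g.1 g.2 b
  choose nx hnx1 hnx2 using hstep
  let bb : ℕ → Bool := fun k => Nat.bodd k
  let s : ℕ → {g // Cross T A g} := fun k => Nat.rec ⟨g₁, hc⟩
    (fun k g => ⟨g.1 * f (bb k) (nx g (bb k)), hnx1 g (bb k)⟩) k
  have hs : ∀ k, (s (k + 1)).1 = (s k).1 * f (bb k) (nx (s k) (bb k)) := fun k => rfl
  let l : ℕ → Σ b, P b := fun k => ⟨bb k, nx (s k) (bb k)⟩
  have hl : ∀ k, (l k).2 ∉ (φ (l k).1).range := by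
    intro k; rw [hrange]; exact hnx2 _ _
  let W : ℕ → ℕ → CoprodI.Word P := fun j m =>
    { toList := (List.range' j m).map l
      ne_one := by
        intro x hx
        obtain ⟨k, -, rfl⟩ := List.mem_map.1 hx
        intro h1
        apply hl k
        rw [h1]; exact one_mem _
      chain_ne := by
        rw [List.isChain_map]
        refine (List.isChain_range' j m 1).imp ?_
        intro a b hab
        subst hab
        simp [l, bb] }
  have hWprod : ∀ m j, θ ((s j).1⁻¹ * (s (j + m)).1) = PushoutI.ofCoprodI (W j m).prod := by
    intro m
    induction m with
    | zero => intro j; simp [W, CoprodI.Word.prod]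
    | succ m ih =>
      intro j
      have h1 : (W j (m + 1)).prod = CoprodI.of (l j).2 * (W (j + 1) m).prod := by
        simp [W, CoprodI.Word.prod, List.range'_succ]
      rw [h1, map_mul PushoutI.ofCoprodI, ← ih (j + 1), PushoutI.ofCoprodI_of, ← hθ, ← map_mul]
      congr 1
      have : j + (m + 1) = j + 1 + m := by ring
      rw [this, hs j]
      simp [l, mul_assoc]
  have hmem : ∀ k, ∃ i : ℤ, (s k).1 * T ^ i ∈ {g : G | ¬ (g ∈ A ↔ g * T ∈ A)} :=
    fun k => (s k).2.exists_mem
  choose e he using hmem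
  have hfin := hA T
  obtain ⟨j, -, k, -, hjk, heq⟩ := Set.infinite_univ.exists_lt_map_eq_of_mapsTo
    (f := fun k => (s k).1 * T ^ (e k)) (fun k _ => he k) hfin
  obtain ⟨m, rfl⟩ := Nat.exists_eq_add_of_lt hjk
  have h1 : (s j).1⁻¹ * (s (j + (m + 1))).1 = T ^ (e j - e (j + m + 1)) := by
    rw [zpow_sub, ← add_assoc, eq_mul_inv_iff_mul_eq, mul_assoc, ← heq]
    simp
  have h2 := hWprod (m + 1) j
  rw [h1, hT, ← map_zpow, hθ] at h2
  have h3 := PushoutI.Reduced.eq_empty_of_mem_range hφinj (w := W j (m + 1)) (by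
    intro x hx
    obtain ⟨k, -, rfl⟩ := List.mem_map.1 hx
    exact hl k) (by
    rw [← h2]
    refine ⟨Multiplicative.ofAdd (e j - e (j + m + 1)), ?_⟩
    rw [← PushoutI.of_apply_eq_base φ true]
    simp [hφ])
  have := congrArg CoprodI.Word.toList h3
  simp [W, CoprodI.Word.empty] at this

end Amalgam

section Free

open FreeGroup

variable {α : Type*}

/-- inverse letter -/
def iv (q : α × Bool) : α × Bool := (q.1, !q.2)

@[simp] lemma iv_iv (q : α × Bool) : iv (iv q) = q := by simp [iv]

lemma iv_ne (q : α × Bool) : iv q ≠ q := by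
  intro h
  have := congrArg Prod.snd h
  simp [iv] at this

lemma mk_iv (q : α × Bool) : mk [iv q] = (mk [q])⁻¹ := by simp [iv, inv_mk, invRev]

lemma ne_iv_iff (p q : α × Bool) : (p.1 = q.1 → p.2 = q.2) ↔ p ≠ iv q := by
  obtain ⟨a, b⟩ := p
  obtain ⟨c, d⟩ := q
  simp only [iv, ne_eq, Prod.mk.injEq, not_and]
  cases b <;> cases d <;> simp

lemma fst_eq_iff (p q : α × Bool) : p.1 = q.1 ↔ p = q ∨ p = iv q := by
  obtain ⟨a, b⟩ := p
  obtain ⟨c, d⟩ := q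
  simp only [iv, Prod.mk.injEq]
  cases b <;> cases d <;> simp

lemma mk_cons' (a : α × Bool) (r : List (α × Bool)) : mk (a :: r) = mk [a] * mk r := by
  rw [mul_mk]; rfl

lemma AI_of_letters {A : Set (FreeGroup α)}
    (h : ∀ q : α × Bool, {g : FreeGroup α | ¬ (g ∈ A ↔ g * mk [q] ∈ A)}.Finite) : AI A := by
  have key : ∀ L : List (α × Bool), {g : FreeGroup α | ¬ (g ∈ A ↔ g * mk L ∈ A)}.Finite := by
    intro L
    induction L with
    | nil => simp [← one_eq_mk]
    | cons q L ih =>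
      have hi : Function.Injective (fun g : FreeGroup α => g * mk [q]) := mul_left_injective _
      refine ((h q).union (ih.preimage hi.injOn)).subset ?_
      intro g hg
      simp only [Set.mem_ofPred_eq, Set.mem_union, Set.mem_preimage] at hg ⊢
      rw [mk_cons', ← mul_assoc] at hg
      tauto
  intro x
  obtain ⟨L, rfl⟩ := Quot.exists_rep x
  exact key L

variable [DecidableEq α]

/-- words starting with the letter `q` -/
def HH (q : α × Bool) : Set (FreeGroup α) := {g | g.toWord.head? = some q}

lemma toWord_mk_red {L : List (α × Bool)} (h : IsReduced L) : (mk L).toWord = L := by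
  rw [toWord_mk, h.reduce_eq]

lemma HH_disj {p q : α × Bool} (h : p ≠ q) : Disjoint (HH p) (HH q) := by
  rw [Set.disjoint_left]
  intro g hp hq
  simp only [HH, Set.mem_ofPred_eq] at hp hq
  rw [hp] at hq
  exact h (by simpa using hq)

lemma mem_HH_nonempty (q : α × Bool) : mk [q] ∈ HH q := by
  simp only [HH, Set.mem_ofPred_eq]
  rw [toWord_mk_red IsReduced.singleton]; rfl

lemma mul_letter (x : FreeGroup α) (q : α × Bool) :
    (x * mk [q]).toWord = x.toWord ++ [q] ∨
    (x.toWord = (x * mk [q]).toWord ++ [iv q]) := by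
  have hx : IsReduced x.toWord := isReduced_toWord
  rcases List.eq_nil_or_concat' x.toWord with h | ⟨L, b, h⟩
  · left
    have : x = 1 := toWord_eq_nil_iff.1 h
    subst this
    simp [toWord_mk_red IsReduced.singleton]
  · by_cases hb : b = iv q
    · right
      subst hb
      have h1 : x * mk [q] = mk L := by
        rw [← mk_toWord (x := x), h, ← mul_mk, mk_iv, inv_mul_cancel_right]
      rw [h1, toWord_mk_red, h]
      rw [h] at hx
      exact hx.infix ⟨[], [iv q], by simp⟩
    · left
      have h1 : x * mk [q] = mk (x.toWord ++ [q]) := by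
        rw [← mul_mk, mk_toWord]
      rw [h1, toWord_mk_red]
      rw [h]
      rw [h] at hx
      refine IsReduced.append_overlap hx ?_ (by simp)
      simp only [List.singleton_append, isReduced_cons_cons, IsReduced.singleton, and_true]
      exact (ne_iv_iff _ _).2 hb

lemma head_mul_letter {x : FreeGroup α} {q : α × Bool} (h : x ≠ 1) (h' : x * mk [q] ≠ 1) :
    (x * mk [q]).toWord.head? = x.toWord.head? := by
  have h1 : x.toWord ≠ [] := fun hh => h (toWord_eq_nil_iff.1 hh)
  have h2 : (x * mk [q]).toWord ≠ [] := fun hh => h' (toWord_eq_nil_iff.1 hh)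
  rcases mul_letter x q with hw | hw
  · rw [hw, List.head?_append_of_ne_nil _ h1]
  · conv_rhs => rw [hw]
    rw [List.head?_append_of_ne_nil _ h2]

lemma AI_HH (q : α × Bool) : AI (HH q) := by
  apply AI_of_letters
  intro p
  refine (Set.toFinite {1, mk [iv p]}).subset ?_
  intro g hg
  by_contra hc
  simp only [Set.mem_insert_iff, Set.mem_singleton_iff, not_or] at hc
  apply hg
  simp only [HH, Set.mem_ofPred_eq]
  rw [head_mul_letter hc.1]
  intro h1
  apply hc.2
  rw [mk_iv]
  exact eq_inv_of_mul_eq_one_left h1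

lemma prefix_iff {v : FreeGroup α} {q : α × Bool} (h : IsReduced (v.toWord ++ [q]))
    (g : FreeGroup α) : (v.toWord ++ [q] <+: g.toWord) ↔ v⁻¹ * g ∈ HH q := by
  constructor
  · rintro ⟨r, hr⟩
    have h1 : v⁻¹ * g = mk (q :: r) := by
      rw [← mk_toWord (x := g), ← hr, List.append_assoc, ← mul_mk, mk_toWord]
      simp
    have h2 : IsReduced (q :: r) := by
      have : IsReduced g.toWord := isReduced_toWord
      rw [← hr] at this
      exact this.infix ⟨v.toWord, [], by simp⟩
    simp only [HH, Set.mem_ofPred_eq]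
    rw [h1, toWord_mk_red h2]; rfl
  · intro hg
    simp only [HH, Set.mem_ofPred_eq] at hg
    obtain ⟨r, hr⟩ := List.head?_eq_some_iff.1 hg
    have h2 : IsReduced (q :: r) := by rw [← hr]; exact isReduced_toWord
    have h3 : IsReduced (v.toWord ++ [q] ++ r) := IsReduced.append_overlap h h2 (by simp)
    have h4 : g = mk (v.toWord ++ [q] ++ r) := by
      rw [List.append_assoc, ← mul_mk, mk_toWord, List.singleton_append, ← hr, mk_toWord]
      simp
    rw [h4, toWord_mk_red h3]
    exact ⟨r, rfl⟩

lemma letter_mul_mem (a : α × Bool) (z : FreeGroup α) :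
    mk [a] * z ∈ HH a ↔ z ∉ HH (iv a) := by
  have hz : IsReduced z.toWord := isReduced_toWord
  constructor
  · intro h h'
    simp only [HH, Set.mem_ofPred_eq] at h h'
    obtain ⟨r, hr⟩ := List.head?_eq_some_iff.1 h'
    rw [hr] at hz
    have h1 : mk [a] * z = mk r := by
      rw [← mk_toWord (x := z), hr, mk_cons' (iv a), mk_iv, mul_inv_cancel_left]
    rw [h1, toWord_mk_red (hz.infix ⟨[iv a], [], by simp⟩)] at h
    obtain ⟨r', rfl⟩ := List.head?_eq_some_iff.1 h
    rw [isReduced_cons_cons, ne_iv_iff] at hz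
    exact hz.1 rfl
  · intro h
    have h1 : mk [a] * z = mk (a :: z.toWord) := by
      rw [mk_cons' a z.toWord, mk_toWord]
    have h2 : IsReduced (a :: z.toWord) := by
      rcases hzw : z.toWord with _ | ⟨b, r⟩
      · exact IsReduced.singleton
      · rw [isReduced_cons_cons, ne_iv_iff, ← hzw]
        refine ⟨?_, hz⟩
        rintro rfl
        apply h
        simp only [HH, Set.mem_ofPred_eq, iv_iv, hzw]; rfl
    simp only [HH, Set.mem_ofPred_eq, h1]
    rw [toWord_mk_red h2]; rfl

/-- branch at `v` -/
def TT (v : FreeGroup α) : Set (FreeGroup α) := {g | v.toWord <+: g.toWord}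

lemma TT_child {v : FreeGroup α} {q : α × Bool} (h : IsReduced (v.toWord ++ [q])) :
    TT (v * mk [q]) = {g | v⁻¹ * g ∈ HH q} := by
  ext g
  have : (v * mk [q]).toWord = v.toWord ++ [q] := by
    rw [← toWord_mk_red h, ← mul_mk, mk_toWord]
  simp only [TT, this, Set.mem_ofPred_eq]
  exact prefix_iff h g

lemma TT_eq {v : FreeGroup α} {L : List (α × Bool)} {a : α × Bool} (h : v.toWord = L ++ [a]) :
    TT v = {g | v⁻¹ * g ∉ HH (iv a)} := by
  have hv : IsReduced (L ++ [a]) := h ▸ isReduced_toWord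
  have hL : IsReduced L := hv.infix ⟨[], [a], by simp⟩
  have hL' := toWord_mk_red hL
  have h1 : v = mk L * mk [a] := by rw [mul_mk, ← h, mk_toWord]
  ext g
  have h2 := congrArg (g ∈ ·) (TT_child (v := mk L) (q := a) (by rwa [hL']))
  simp only [Set.mem_ofPred_eq, eq_iff_iff] at h2
  simp only [Set.mem_ofPred_eq]
  rw [h1, h2, ← letter_mul_mem, mul_inv_rev, mul_assoc, mul_inv_cancel_left]

lemma TT_nested (v w : FreeGroup α) : TT v ⊆ TT w ∨ TT w ⊆ TT v ∨ Disjoint (TT v) (TT w) := by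
  by_cases h : Disjoint (TT v) (TT w)
  · exact Or.inr (Or.inr h)
  obtain ⟨g, h1, h2⟩ := Set.not_disjoint_iff.1 h
  rcases List.prefix_or_prefix_of_prefix h1 h2 with h3 | h3
  · right; left
    intro x hx
    exact h3.trans hx
  · left
    intro x hx
    exact h3.trans hx

lemma AI.exists_finset [Fintype α] {B : Set (FreeGroup α)} (hB : AI B) :
    ∃ K : Finset (FreeGroup α), ∀ w ∉ K, TT w ⊆ B ∨ TT w ⊆ Bᶜ := by
  set D : Set (FreeGroup α) := ⋃ q : α × Bool, {g | ¬ (g ∈ B ↔ g * mk [q] ∈ B)} with hD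
  have hDf : D.Finite := Set.finite_iUnion fun q => hB _
  have hK : (⋃ g ∈ D, {w : FreeGroup α | w.toWord <+: g.toWord}).Finite := by
    refine hDf.biUnion fun g _ => ?_
    have : {w : FreeGroup α | w.toWord <+: g.toWord} =
        toWord ⁻¹' {l | l ∈ g.toWord.inits} := by
      ext w; simp
    rw [this]
    exact (List.finite_toSet _).preimage toWord_injective.injOn
  refine ⟨hK.toFinset, fun w hw => ?_⟩
  simp only [Set.Finite.mem_toFinset, Set.mem_iUnion, not_exists, Set.mem_ofPred_eq] at hw
  have key : ∀ r, IsReduced (w.toWord ++ r) → (mk (w.toWord ++ r) ∈ B ↔ w ∈ B) := by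
    intro r
    induction r using List.reverseRecOn with
    | nil => intro _; simp [mk_toWord]
    | append_singleton r q ih =>
      intro hr
      rw [← List.append_assoc] at hr ⊢
      have hr' : IsReduced (w.toWord ++ r) := hr.infix ⟨[], [q], by simp⟩
      rw [← ih hr', ← mul_mk]
      by_contra hc
      refine hw (mk (w.toWord ++ r)) ?_ ?_
      · rw [hD]
        refine Set.mem_iUnion.2 ⟨q, ?_⟩
        intro h
        exact hc h.symm
      · rw [toWord_mk_red hr']; exact ⟨r, rfl⟩
  have key' : ∀ g ∈ TT w, (g ∈ B ↔ w ∈ B) := by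
    rintro g ⟨r, hr⟩
    have := key r (by rw [hr]; exact isReduced_toWord)
    rwa [hr, mk_toWord] at this
  by_cases hwB : w ∈ B
  · left; intro g hg; exact (key' g hg).2 hwB
  · right; intro g hg hh; exact hwB ((key' g hg).1 hh)

end Free

section Line

open FreeGroup

/-- A periodic, bi-infinitely reduced word. -/
structure Cyc (α : Type*) where
  make ::
  τ : ℕ → α × Bool
  ℓ : ℕ
  pos : 0 < ℓ
  per : ∀ k, τ (k + ℓ) = τ k
  red : ∀ k, τ k ≠ iv (τ (k + 1))

namespace Cyc

variable {α : Type*} (c : Cyc α)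

/-- subword -/
def W (i m : ℕ) : List (α × Bool) := (List.range' i m).map c.τ

/-- prefix -/
def u (i : ℕ) : FreeGroup α := mk (c.W 0 i)

/-- the period -/
def t : FreeGroup α := c.u c.ℓ

/-- backward direction -/
def x (i : ℕ) : α × Bool := iv (c.τ (i + c.ℓ - 1))

lemma W_red (i m : ℕ) : IsReduced (c.W i m) := by
  unfold W FreeGroup.IsReduced
  rw [List.isChain_map]
  refine (List.isChain_range' i m 1).imp ?_
  intro a b hab
  subst hab
  exact (ne_iv_iff _ _).2 (c.red a)

lemma W_add (i m m' : ℕ) : c.W i (m + m') = c.W i m ++ c.W (i + m) m' := by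
  unfold W
  rw [← List.map_append, List.range'_append_1]

lemma W_succ (i m : ℕ) : c.W i (m + 1) = c.W i m ++ [c.τ (i + m)] := by
  rw [W_add]; rfl

lemma W_per (i m : ℕ) : c.W (i + c.ℓ) m = c.W i m := by
  unfold W
  rw [List.range'_eq_map_range, List.range'_eq_map_range, List.map_map, List.map_map]
  apply List.map_congr_left
  intro k _
  simp only [Function.comp]
  rw [show i + c.ℓ + k = i + k + c.ℓ by ring, c.per]

lemma τ_per (n k : ℕ) : c.τ (n * c.ℓ + k) = c.τ k := by
  induction n with
  | zero => simp
  | succ n ih => rw [← ih, ← c.per (n * c.ℓ + k)]; congr 1; ring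

lemma W_per' (n m : ℕ) : c.W (n * c.ℓ) m = c.W 0 m := by
  induction n with
  | zero => simp
  | succ n ih => rw [← ih, ← c.W_per (n * c.ℓ)]; congr 1; ring

lemma u_zero : c.u 0 = 1 := rfl

lemma u_succ (i : ℕ) : c.u (i + 1) = c.u i * mk [c.τ i] := by
  unfold u
  rw [W_succ, ← mul_mk, zero_add]

lemma t_pow (n : ℕ) : c.t ^ n = c.u (n * c.ℓ) := by
  induction n with
  | zero => simp [u_zero]
  | succ n ih =>
    rw [pow_succ, ih, t]
    unfold u
    rw [mul_mk, ← c.W_per' n c.ℓ]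
    congr 1
    rw [add_mul, one_mul, W_add, zero_add]

lemma t_pow_u (n i : ℕ) : c.t ^ n * c.u i = c.u (n * c.ℓ + i) := by
  rw [t_pow]
  unfold u
  rw [mul_mk, ← c.W_per' n i, W_add, zero_add]

lemma inv_u_t_pow {i n : ℕ} (h : i ≤ n * c.ℓ) :
    (c.u i)⁻¹ * c.t ^ n = mk (c.W i (n * c.ℓ - i)) := by
  rw [inv_mul_eq_iff_eq_mul, t_pow]
  unfold u
  rw [mul_mk]
  conv_lhs => rw [← Nat.add_sub_cancel' h, W_add, zero_add]

lemma x_ne (i : ℕ) : c.x i ≠ c.τ i := by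
  unfold x
  intro h
  have h1 := c.red (i + c.ℓ - 1)
  have := c.pos
  rw [show i + c.ℓ - 1 + 1 = i + c.ℓ by omega, c.per, ← h, iv_iv] at h1
  exact h1 rfl

lemma x_succ (i : ℕ) : c.x (i + 1) = iv (c.τ i) := by
  unfold x
  rw [show i + 1 + c.ℓ - 1 = i + c.ℓ by omega, c.per]

lemma x_per : c.x c.ℓ = c.x 0 := by
  unfold x
  have := c.pos
  rw [show c.ℓ + c.ℓ - 1 = (c.ℓ - 1) + c.ℓ by omega, c.per]
  simp

lemma sum_x {M : Type*} [AddCommMonoid M] (f : α × Bool → M) :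
    ∑ i ∈ Finset.range c.ℓ, f (c.x i) = ∑ i ∈ Finset.range c.ℓ, f (iv (c.τ i)) := by
  obtain ⟨m, hm⟩ : ∃ m, c.ℓ = m + 1 := ⟨c.ℓ - 1, by have := c.pos; omega⟩
  have h1 : c.x (m + 1) = c.x 0 := by rw [← hm, x_per]
  rw [hm, Finset.sum_range_succ', Finset.sum_range_succ]
  simp only [x_succ]
  congr 1
  rw [← h1, x_succ]

variable [DecidableEq α]

lemma toWord_W (i m : ℕ) : (mk (c.W i m)).toWord = c.W i m := toWord_mk_red (c.W_red i m)

lemma norm_u (i : ℕ) : (c.u i).norm = i := by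
  unfold FreeGroup.norm u
  rw [toWord_W]
  simp [W]

lemma t_ne_one : c.t ≠ 1 := by
  intro h
  have := c.norm_u c.ℓ
  have h2 := c.pos
  rw [← t, h, FreeGroup.norm_one] at this
  omega

lemma t_ord : ¬ IsOfFinOrder c.t := not_isOfFinOrder_of_isMulTorsionFree c.t_ne_one

lemma ray_pos {i n : ℕ} (hi : i < c.ℓ) (hn : 1 ≤ n) : (c.u i)⁻¹ * c.t ^ n ∈ HH (c.τ i) := by
  have h1 : i < n * c.ℓ := by nlinarith
  rw [c.inv_u_t_pow h1.le]
  simp only [HH, Set.mem_ofPred_eq]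
  rw [toWord_W]
  obtain ⟨m, hm⟩ : ∃ m, n * c.ℓ - i = m + 1 := ⟨n * c.ℓ - i - 1, by omega⟩
  rw [hm]
  simp [W, List.range'_succ]

lemma ray_neg {i n : ℕ} (hn : 1 ≤ n) : (c.u i)⁻¹ * c.t⁻¹ ^ n ∈ HH (c.x i) := by
  rw [inv_pow, ← mul_inv_rev, t_pow_u]
  simp only [HH, Set.mem_ofPred_eq]
  rw [toWord_inv, u, toWord_W]
  have h1 : 0 < n * c.ℓ + i := by have := c.pos; positivity
  obtain ⟨m, hm⟩ : ∃ m, n * c.ℓ + i = m + 1 := ⟨n * c.ℓ + i - 1, by omega⟩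
  rw [hm, W_succ]
  have h2 : c.τ m = c.τ (i + c.ℓ - 1) := by
    obtain ⟨k, rfl⟩ := Nat.exists_eq_add_of_le' hn
    have : m = k * c.ℓ + (i + c.ℓ - 1) := by
      have := c.pos
      rw [add_mul] at hm
      omega
    rw [this, τ_per]
  simp [invRev, x, h2, iv]

lemma EE_pos {i : ℕ} (hi : i < c.ℓ) : EE c.t (HH (c.τ i)) (c.u i)⁻¹ :=
  Filter.eventually_atTop.2 ⟨1, fun _ hn => c.ray_pos hi hn⟩

lemma EE_neg (i : ℕ) : EE c.t⁻¹ (HH (c.x i)) (c.u i)⁻¹ :=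
  Filter.eventually_atTop.2 ⟨1, fun _ hn => c.ray_neg hn⟩

lemma through_unique {i j : ℕ} (hi : i < c.ℓ) (hj : j < c.ℓ)
    (h : ((c.u i)⁻¹)⁻¹ * (c.u j)⁻¹ ∈ Subgroup.zpowers c.t) : i = j := by
  have key : ∀ {i j : ℕ} (k : ℕ), i < c.ℓ → c.u i = c.t ^ k * c.u j → i = j := by
    intro i j k hi h
    have := congrArg FreeGroup.norm h
    rw [t_pow_u, norm_u, norm_u] at this
    rcases Nat.eq_zero_or_pos k with rfl | hk
    · simpa using this
    · nlinarith
  rw [inv_inv] at h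
  obtain ⟨k, hk⟩ := h
  simp only at hk
  rcases Int.eq_nat_or_neg k with ⟨n, rfl | rfl⟩
  · refine key n hi ?_
    rw [zpow_natCast] at hk
    rw [hk]; simp
  · refine (key n hj ?_).symm
    rw [zpow_neg, zpow_natCast, inv_eq_iff_eq_inv] at hk
    rw [hk]; simp

lemma not_through {g : FreeGroup α} (h : ∀ i < c.ℓ, ((c.u i)⁻¹)⁻¹ * g ∉ Subgroup.zpowers c.t) :
    ∃ q, ∀ k : ℤ, g * c.t ^ k ∈ HH q := by
  have h1 : ∀ i < c.ℓ, ∀ k : ℤ, g * c.t ^ k * c.u i ≠ 1 := by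
    intro i hi k hk
    apply h i hi
    refine ⟨-k, ?_⟩
    simp only
    rw [mul_assoc, mul_eq_one_iff_eq_inv] at hk
    rw [hk, zpow_neg]
    simp
  have h0 : ∀ k : ℤ, g * c.t ^ k ≠ 1 := by
    intro k
    have := h1 0 c.pos k
    rwa [u_zero, mul_one] at this
  have h2 : ∀ i ≤ c.ℓ, ∀ k : ℤ, g * c.t ^ k * c.u i ≠ 1 := by
    intro i hi k
    rcases hi.lt_or_eq with h | rfl
    · exact h1 i h k
    · have := h0 (k + 1)
      rwa [zpow_add_one, ← mul_assoc] at this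
  have h3 : ∀ i ≤ c.ℓ, ∀ k : ℤ,
      (g * c.t ^ k * c.u i).toWord.head? = (g * c.t ^ k).toWord.head? := by
    intro i
    induction i with
    | zero => intro _ k; rw [u_zero, mul_one]
    | succ i ih =>
      intro hi k
      have h4 := h2 (i + 1) hi k
      rw [← ih (by omega) k, u_succ, ← mul_assoc]
      rw [u_succ, ← mul_assoc] at h4
      exact head_mul_letter (h2 i (by omega) k) h4
  have h4 : ∀ k : ℤ, (g * c.t ^ (k + 1)).toWord.head? = (g * c.t ^ k).toWord.head? := by
    intro k
    rw [← h3 c.ℓ le_rfl k, zpow_add_one, ← mul_assoc]; rfl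
  have h5 : ∀ k : ℤ, (g * c.t ^ k).toWord.head? = g.toWord.head? := by
    intro k
    induction k using Int.induction_on with
    | zero => simp
    | succ k ih => rw [h4, ih]
    | pred k ih => rw [← ih, ← h4]; simp
  have h6 : g.toWord ≠ [] := by
    have := h0 0
    simpa using this
  obtain ⟨q, r, hqr⟩ := List.exists_cons_of_ne_nil h6
  refine ⟨q, fun k => ?_⟩
  simp only [HH, Set.mem_ofPred_eq]
  rw [h5, hqr]; rfl

end Cyc

end Line

section Comb

open FreeGroup

/-- indicator of a proposition -/
noncomputable def ind (p : Prop) : ℕ := by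
  classical exact if p then 1 else 0

lemma ind_pos {p : Prop} (h : p) : ind p = 1 := by simp [ind, h]

lemma ind_neg {p : Prop} (h : ¬ p) : ind p = 0 := by simp [ind, h]

lemma ind_le (p : Prop) : ind p ≤ 1 := by
  by_cases h : p
  · rw [ind_pos h]
  · rw [ind_neg h]; omega

lemma ind_congr {p q : Prop} (h : p ↔ q) : ind p = ind q := by rw [propext h]

lemma sum_ind_pos {n : ℕ} {p : ℕ → Prop} {i : ℕ} (hi : i < n) (h : p i) :
    1 ≤ ∑ i ∈ Finset.range n, ind (p i) := by
  have := Finset.single_le_sum (f := fun i => ind (p i)) (fun _ _ => Nat.zero_le _)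
    (Finset.mem_range.2 hi)
  simp only [ind_pos h] at this
  exact this

lemma sum_ind_two {n : ℕ} {p : ℕ → Prop} {i j : ℕ} (hi : i < n) (hj : j < n) (hij : i ≠ j)
    (h : p i) (h' : p j) :
    2 ≤ ∑ i ∈ Finset.range n, ind (p i) := by
  have h1 : ({i, j} : Finset ℕ) ⊆ Finset.range n := by
    intro k hk
    simp only [Finset.mem_insert, Finset.mem_singleton] at hk
    rcases hk with rfl | rfl <;> simpa
  have := Finset.sum_le_sum_of_subset (f := fun i => ind (p i)) h1
  rw [Finset.sum_pair hij, ind_pos h, ind_pos h'] at this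
  exact this

lemma sum_ind_exists {n : ℕ} {p : ℕ → Prop} (h : ∑ i ∈ Finset.range n, ind (p i) ≠ 0) :
    ∃ i < n, p i := by
  by_contra hc
  push Not at hc
  apply h
  apply Finset.sum_eq_zero
  intro i hi
  exact ind_neg (hc i (Finset.mem_range.1 hi))

lemma sum_ind_one {n : ℕ} {p : ℕ → Prop} {j : ℕ} (hj : j < n) (h : p j)
    (hu : ∀ i < n, p i → i = j) :
    ∑ i ∈ Finset.range n, ind (p i) = 1 := by
  rw [Finset.sum_eq_single_of_mem j (Finset.mem_range.2 hj), ind_pos h]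
  intro i hi hij
  exact ind_neg fun hp => hij (hu i (Finset.mem_range.1 hi) hp)

lemma pl1 {P N X Y qx qy : Prop} (hxy : X → ¬ Y) (d1 : ¬ Y → (P ↔ ¬ qy))
    (d2 : ¬ X → (N ↔ ¬ qx)) (hnc : ¬ ¬ (P ↔ N)) :
    ¬ ((P ∨ ¬ Y) ↔ (N ∨ ¬ X)) ↔ (X ∧ qy ∨ Y ∧ qx) := by
  by_cases hX : X <;> by_cases hY : Y <;> by_cases h1 : qx <;> by_cases h2 : qy <;> simp_all

lemma pl2 {P N X Y qx qy : Prop} (hxy : X → ¬ Y) (d1 : ¬ Y → (P ↔ ¬ qy))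
    (d2 : ¬ X → (N ↔ ¬ qx)) (p1 : ¬ (¬ X ∧ ¬ Y ∧ ¬ (qx ↔ qy))) (p2 : ¬ (X ∧ qy ∨ Y ∧ qx)) :
    ¬ ((P ∨ ¬ Y) ↔ (N ∨ ¬ X)) ↔ ¬ (P ↔ N) := by
  by_cases hX : X <;> by_cases hY : Y <;> by_cases h1 : qx <;> by_cases h2 : qy <;> simp_all

lemma pl3 {P N X Y qx qy : Prop} (hX : ¬ X) (hY : ¬ Y) :
    ¬ ((P ∨ ¬ Y) ↔ (N ∨ ¬ X)) ↔ (X ∧ qy ∨ Y ∧ qx) := by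
  simp [hX, hY]

namespace Cyc

variable {α : Type*} (c : Cyc α)

/-- capacity of a cut of the Whitehead graph -/
noncomputable def cap (Z : Set (α × Bool)) : ℕ :=
  ∑ i ∈ Finset.range c.ℓ, ind (¬ (c.x i ∈ Z ↔ c.τ i ∈ Z))

/-- number of occurrences of a letter -/
noncomputable def deg (a : α × Bool) : ℕ :=
  ∑ i ∈ Finset.range c.ℓ, (ind (c.τ i = a) + ind (c.τ i = iv a))

lemma deg_eq (a : α × Bool) :
    c.deg a = ∑ i ∈ Finset.range c.ℓ, (ind (c.τ i = a) + ind (c.x i = a)) := by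
  unfold deg
  rw [Finset.sum_add_distrib, Finset.sum_add_distrib, c.sum_x (fun q => ind (q = a))]
  congr 1
  apply Finset.sum_congr rfl
  intro i _
  apply ind_congr
  constructor
  · intro h; rw [h, iv_iv]
  · intro h; rw [← h, iv_iv]

lemma cap_ne_one (hcut : ∀ a Z, a ∈ Z → iv a ∉ Z → c.deg a ≤ c.cap Z)
    (hdeg : ∀ a, c.deg a ≠ 1) (Q : Set (α × Bool)) : c.cap Q ≠ 1 := by
  by_cases h : ∃ i < c.ℓ, ¬ (c.τ i ∈ Q ↔ iv (c.τ i) ∈ Q)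
  · obtain ⟨i, hi, h⟩ := h
    have key : ∃ a, a ∈ Q ∧ iv a ∉ Q ∧ 1 ≤ c.deg a := by
      by_cases h1 : c.τ i ∈ Q
      · refine ⟨c.τ i, h1, by tauto, ?_⟩
        have := sum_ind_pos (p := fun k => c.τ k = c.τ i) hi rfl
        unfold deg
        rw [Finset.sum_add_distrib]
        omega
      · refine ⟨iv (c.τ i), by tauto, by simpa using h1, ?_⟩
        have := sum_ind_pos (p := fun k => c.τ k = iv (iv (c.τ i))) hi (by simp)
        unfold deg
        rw [Finset.sum_add_distrib]
        omega
    obtain ⟨a, h1, h2, h3⟩ := key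
    have := hcut a Q h1 h2
    have := hdeg a
    omega
  · push Not at h
    have h2 : ((c.cap Q : ℕ) : ZMod 2) = 0 := by
      have e1 : ((c.cap Q : ℕ) : ZMod 2) =
          ∑ i ∈ Finset.range c.ℓ, (((ind (c.x i ∈ Q) : ℕ) : ZMod 2) + (ind (c.τ i ∈ Q) : ℕ)) := by
        unfold cap
        push_cast
        apply Finset.sum_congr rfl
        intro i _
        by_cases hx : c.x i ∈ Q <;> by_cases hy : c.τ i ∈ Q <;> simp [ind, hx, hy]
        decide
      rw [e1, Finset.sum_add_distrib, c.sum_x (fun q => ((ind (q ∈ Q) : ℕ) : ZMod 2)),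
        ← Finset.sum_add_distrib]
      apply Finset.sum_eq_zero
      intro i hi
      rw [ind_congr (h i (Finset.mem_range.1 hi))]
      exact CharTwo.add_self_eq_zero _
    intro h1
    rw [h1] at h2
    exact absurd h2 (by decide)

variable [DecidableEq α]

lemma through_or (g : FreeGroup α) :
    (∃ i < c.ℓ, ((c.u i)⁻¹)⁻¹ * g ∈ Subgroup.zpowers c.t) ∨
    ∃ q, EE c.t (HH q) g ∧ EE c.t⁻¹ (HH q) g := by
  by_cases h : ∃ i < c.ℓ, ((c.u i)⁻¹)⁻¹ * g ∈ Subgroup.zpowers c.t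
  · exact Or.inl h
  · push Not at h
    obtain ⟨q, hq⟩ := c.not_through h
    refine Or.inr ⟨q, Filter.Eventually.of_forall fun n => ?_,
      Filter.Eventually.of_forall fun n => ?_⟩
    · simpa using hq n
    · simpa using hq (-n)

/-- A set constant in the direction `q` -/
lemma EE_const {B : Set (FreeGroup α)} {t g : FreeGroup α} {q : α × Bool}
    (hE : EE t (HH q) g) (hB : HH q ⊆ B ∨ HH q ⊆ Bᶜ) : EE t B g ↔ HH q ⊆ B := by
  constructor
  · intro h
    rcases hB with hB | hB
    · exact hB
    · exact absurd h (EE_disj (Set.disjoint_left.2 hB) hE)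
  · intro h
    exact EE_mono h hE

/-- Lines not through the basepoint do not matter: the single-crossing set from data. -/
lemma single_of {B : Set (FreeGroup α)} {j : ℕ} (hj : j < c.ℓ)
    (h1 : ∀ i < c.ℓ, Cross c.t B (c.u i)⁻¹ ↔ i = j)
    (h2 : ∀ g q, EE c.t (HH q) g → EE c.t⁻¹ (HH q) g → ¬ Cross c.t B g) : Single c.t B := by
  refine ⟨(c.u j)⁻¹, fun g => ?_⟩
  constructor
  · intro h
    rcases c.through_or g with ⟨i, hi, hg⟩ | ⟨q, hq, hq'⟩
    · rw [Cross_coset hg, h1 i hi] at h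
      rwa [← h]
    · exact absurd h (h2 g q hq hq')
  · intro h
    rw [Cross_coset h, h1 j hj]

lemma base (hcut : ∀ a Z, a ∈ Z → iv a ∉ Z → c.deg a ≤ c.cap Z)
    (hdeg : ∀ a, c.deg a ≠ 1) {B : Set (FreeGroup α)} (hs : Single c.t B)
    (hB : ∀ q, HH q ⊆ B ∨ HH q ⊆ Bᶜ) : False := by
  obtain ⟨g₀, hg₀⟩ := hs
  set Q : Set (α × Bool) := {q | ¬ HH q ⊆ B} with hQ
  have hc : ∀ i < c.ℓ, Cross c.t B (c.u i)⁻¹ ↔ ¬ (c.x i ∈ Q ↔ c.τ i ∈ Q) := by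
    intro i hi
    unfold Cross
    rw [EE_const (c.EE_pos hi) (hB _), EE_const (c.EE_neg i) (hB _)]
    simp only [hQ, Set.mem_ofPred_eq]
    tauto
  have h1 : Cross c.t B g₀ := (hg₀ g₀).2 (by simp)
  rcases c.through_or g₀ with ⟨j, hj, hg⟩ | ⟨q, hq, hq'⟩
  · have hj' : Cross c.t B (c.u j)⁻¹ := (Cross_coset hg).1 h1
    apply c.cap_ne_one hcut hdeg Q
    apply sum_ind_one hj ((hc j hj).1 hj')
    intro i hi hi'
    have e1 := (hg₀ _).1 ((hc i hi).2 hi')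
    have e2 := (hg₀ _).1 hj'
    apply c.through_unique hi hj
    have := mul_mem (inv_mem e1) e2
    simpa [mul_assoc] using this
  · exact h1 (by rw [EE_const hq (hB _), EE_const hq' (hB _)])

lemma step (hcut : ∀ a Z, a ∈ Z → iv a ∉ Z → c.deg a ≤ c.cap Z)
    (hdeg : ∀ a, c.deg a ≠ 1) {B : Set (FreeGroup α)} (hAI : AI B) (hs : Single c.t B)
    (e : α × Bool) (hB : ∀ q, q ≠ e → HH q ⊆ B ∨ HH q ⊆ Bᶜ) (he : HH (iv e) ⊆ B) :
    Single c.t (B ∪ (HH e)ᶜ) := by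
  have ht := c.t_ord
  have ht' : ¬ IsOfFinOrder c.t⁻¹ := by simpa using ht
  set Q : Set (α × Bool) := {q | q ≠ e ∧ ¬ HH q ⊆ B} with hQ
  have heQ : e ∉ Q := fun h => h.1 rfl
  -- values of ends
  have E1 : ∀ {t g : FreeGroup α} {q}, ¬ IsOfFinOrder t → EE t (HH q) g → q ≠ e →
      (EE t B g ↔ q ∉ Q) := by
    intro t g q _ hE hq
    rw [EE_const hE (hB q hq)]
    simp only [hQ, Set.mem_ofPred_eq]
    tauto
  have E2 : ∀ {t g : FreeGroup α} {q}, ¬ IsOfFinOrder t → EE t (HH q) g →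
      (EE t (B ∪ (HH e)ᶜ) g ↔ EE t B g ∨ q ≠ e) := by
    intro t g q ht hE
    rw [EE_union hAI (AI_HH e).compl ht, EE_compl (AI_HH e) ht]
    refine or_congr Iff.rfl ?_
    constructor
    · rintro h rfl; exact h hE
    · intro h; exact EE_disj (HH_disj h) hE
  -- lines not through the base point
  have N1 : ∀ g q, EE c.t (HH q) g → EE c.t⁻¹ (HH q) g →
      (Cross c.t (B ∪ (HH e)ᶜ) g ↔ Cross c.t B g) := by
    intro g q h h'
    unfold Cross
    rw [E2 ht h, E2 ht' h']
    by_cases hq : q = e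
    · simp [hq]
    · rw [E1 ht h hq, E1 ht' h' hq]
      simp
  obtain ⟨g₀, hg₀⟩ := hs
  have huniq : ∀ g g', Cross c.t B g → Cross c.t B g' → g⁻¹ * g' ∈ Subgroup.zpowers c.t := by
    intro g g' h h'
    have := mul_mem (inv_mem ((hg₀ _).1 h)) ((hg₀ _).1 h')
    simpa [mul_assoc] using this
  -- Cross at through lines
  have C1 : ∀ i < c.ℓ, c.x i ≠ e → c.τ i ≠ e →
      (Cross c.t B (c.u i)⁻¹ ↔ ¬ (c.x i ∈ Q ↔ c.τ i ∈ Q)) := by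
    intro i hi hx hy
    unfold Cross
    rw [E1 ht (c.EE_pos hi) hy, E1 ht' (c.EE_neg i) hx]
    tauto
  have C2 : ∀ i < c.ℓ, Cross c.t (B ∪ (HH e)ᶜ) (c.u i)⁻¹ ↔
      ¬ ((EE c.t B (c.u i)⁻¹ ∨ c.τ i ≠ e) ↔ (EE c.t⁻¹ B (c.u i)⁻¹ ∨ c.x i ≠ e)) := by
    intro i hi
    unfold Cross
    rw [E2 ht (c.EE_pos hi), E2 ht' (c.EE_neg i)]
  have D1 : ∀ i < c.ℓ, c.τ i ≠ e → (EE c.t B (c.u i)⁻¹ ↔ c.τ i ∉ Q) :=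
    fun i hi h => E1 ht (c.EE_pos hi) h
  have D2 : ∀ i < c.ℓ, c.x i ≠ e → (EE c.t⁻¹ B (c.u i)⁻¹ ↔ c.x i ∉ Q) :=
    fun i hi h => E1 ht' (c.EE_neg i) h
  set PQ : ℕ → Prop := fun i => c.x i ≠ e ∧ c.τ i ≠ e ∧ ¬ (c.x i ∈ Q ↔ c.τ i ∈ Q) with hPQ
  set Qe : ℕ → Prop := fun i => (c.x i = e ∧ c.τ i ∈ Q) ∨ (c.τ i = e ∧ c.x i ∈ Q) with hQe
  have hcount : ∑ i ∈ Finset.range c.ℓ, ind (Qe i) ≤ ∑ i ∈ Finset.range c.ℓ, ind (PQ i) := by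
    have h1 := hcut e (insert e Q) (Set.mem_insert _ _) (by
      rintro (h | h)
      · exact iv_ne e h
      · exact h.2 he)
    have h2 : c.deg e + ∑ i ∈ Finset.range c.ℓ, ind (PQ i) =
        c.cap (insert e Q) + ∑ i ∈ Finset.range c.ℓ, ind (Qe i) := by
      rw [deg_eq, cap, ← Finset.sum_add_distrib, ← Finset.sum_add_distrib]
      apply Finset.sum_congr rfl
      intro i _
      have hxy := c.x_ne i
      simp only [hPQ, hQe, Set.mem_insert_iff]
      generalize c.x i = x at *
      generalize c.τ i = y at *
      by_cases hx : x = e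
      · subst hx
        by_cases hy : y ∈ Q <;> simp [ind, hy, heQ, hxy.symm]
      · by_cases hy : y = e
        · subst hy
          by_cases hy : x ∈ Q <;> simp [ind, hy, heQ, hxy]
        · by_cases hx' : x ∈ Q <;> by_cases hy' : y ∈ Q <;> simp [ind, hx, hy, hx', hy']
    omega
  by_cases hP : ∃ j < c.ℓ, PQ j
  · obtain ⟨j, hj, hPj⟩ := hP
    have hjc : Cross c.t B (c.u j)⁻¹ := (C1 j hj hPj.1 hPj.2.1).2 hPj.2.2
    have hun : ∀ i < c.ℓ, Cross c.t B (c.u i)⁻¹ → i = j := fun i hi h =>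
      c.through_unique hi hj (huniq _ _ h hjc)
    have hP1 : ∑ i ∈ Finset.range c.ℓ, ind (PQ i) = 1 :=
      sum_ind_one hj hPj fun i hi h => hun i hi ((C1 i hi h.1 h.2.1).2 h.2.2)
    have hQex : ∃ j' < c.ℓ, Qe j' := by
      by_contra hno
      push Not at hno
      apply c.cap_ne_one hcut hdeg Q
      rw [← hP1, cap]
      apply Finset.sum_congr rfl
      intro i hi
      apply ind_congr
      have := hno i (Finset.mem_range.1 hi)
      have hxy := c.x_ne i
      simp only [hPQ, hQe] at this ⊢
      constructor
      · intro h
        refine ⟨?_, ?_, h⟩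
        · intro h'
          rw [h'] at h
          tauto
        · intro h'
          rw [h'] at h
          tauto
      · exact fun h => h.2.2
    obtain ⟨j', hj', hQj⟩ := hQex
    have hQu : ∀ i < c.ℓ, Qe i → i = j' := by
      intro i hi h
      by_contra hne
      have := sum_ind_two hi hj' hne h hQj
      omega
    have C3 : ∀ i < c.ℓ, Cross c.t (B ∪ (HH e)ᶜ) (c.u i)⁻¹ ↔ Qe i := by
      intro i hi
      rw [C2 i hi]
      have hxy := c.x_ne i
      by_cases hij : i = j
      · subst hij
        exact pl3 hPj.1 hPj.2.1
      · have hnc : ¬ Cross c.t B (c.u i)⁻¹ := fun h => hij (hun i hi h)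
        exact pl1 (fun hx h => hxy (hx.trans h.symm)) (D1 i hi) (D2 i hi) hnc
    refine c.single_of hj' ?_ ?_
    · intro i hi
      rw [C3 i hi]
      exact ⟨hQu i hi, fun h => h ▸ hQj⟩
    · intro g q h h' hc
      rw [N1 g q h h'] at hc
      have h3 := huniq _ _ hjc hc
      obtain ⟨k, hk⟩ := h3
      have h4 : Cross c.t B g := hc
      have hend : EE c.t (HH q) (c.u j)⁻¹ ∧ EE c.t⁻¹ (HH q) (c.u j)⁻¹ := by
        have hg : g = (c.u j)⁻¹ * c.t ^ k := by
          simp only at hk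
          rw [hk]; simp
        have aux : ∀ (s : FreeGroup α) (A : Set (FreeGroup α)) (x : FreeGroup α) (k : ℤ),
            (EE s A (x * s ^ k) ↔ EE s A x) ∧ (EE s⁻¹ A (x * s ^ k) ↔ EE s⁻¹ A x) := by
          intro s A x k
          induction k using Int.induction_on with
          | zero => simp
          | succ k ih =>
            rw [zpow_add_one, ← mul_assoc, EE_shift, EE_shift']
            exact ih
          | pred k ih =>
            have e : x * s ^ (-(k : ℤ)) = x * s ^ (-(k : ℤ) - 1) * s := by
              rw [mul_assoc, ← zpow_add_one]; simp
            rw [e, EE_shift, EE_shift'] at ih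
            exact ih
        rw [hg, (aux _ _ _ _).1] at h
        rw [hg, (aux _ _ _ _).2] at h'
        exact ⟨h, h'⟩
      have q1 : c.τ j = q := by
        by_contra hne
        exact EE_disj (HH_disj hne) (c.EE_pos hj) hend.1
      have q2 : c.x j = q := by
        by_contra hne
        exact EE_disj (HH_disj hne) (c.EE_neg j) hend.2
      exact c.x_ne j (q2.trans q1.symm)
  · push Not at hP
    have hQ0 : ∀ i < c.ℓ, ¬ Qe i := by
      intro i hi h
      have h1 := sum_ind_pos hi h
      have h2 : ∑ i ∈ Finset.range c.ℓ, ind (PQ i) ≠ 0 := by omega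
      obtain ⟨k, hk, hk'⟩ := sum_ind_exists h2
      exact hP k hk hk'
    refine ⟨g₀, fun g => ?_⟩
    rw [← hg₀]
    rcases c.through_or g with ⟨i, hi, hg⟩ | ⟨q, hq, hq'⟩
    · rw [Cross_coset hg, Cross_coset hg, C2 i hi]
      have hxy := c.x_ne i
      exact pl2 (fun hx h => hxy (hx.trans h.symm)) (D1 i hi) (D2 i hi) (hP i hi) (hQ0 i hi)
    · exact N1 g q hq hq'

end Cyc

end Comb

section Contra

open FreeGroup

namespace Cyc

variable {α : Type*} [DecidableEq α] (c : Cyc α)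

lemma contra (hcut : ∀ a Z, a ∈ Z → iv a ∉ Z → c.deg a ≤ c.cap Z)
    (hdeg : ∀ a, c.deg a ≠ 1) : ∀ (n : ℕ) (K : Finset (FreeGroup α)), K.card = n →
    ∀ B : Set (FreeGroup α), AI B → Single c.t B →
    (∀ w ∉ K, TT w ⊆ B ∨ TT w ⊆ Bᶜ) → False := by
  intro n
  induction n using Nat.strong_induction_on with
  | _ n ih =>
  intro K hK B hB hs hc
  by_cases hv : ∃ v ∈ K, v ≠ 1
  · have hne : K.Nonempty := ⟨hv.choose, hv.choose_spec.1⟩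
    obtain ⟨v, hvK, hmax⟩ := Finset.exists_max_image K FreeGroup.norm hne
    have hv1 : v ≠ 1 := by
      rintro rfl
      obtain ⟨w, hw, hw1⟩ := hv
      have := hmax w hw
      rw [FreeGroup.norm_one, Nat.le_zero, FreeGroup.norm_eq_zero] at this
      exact hw1 this
    rcases List.eq_nil_or_concat' v.toWord with h | ⟨L, a, h⟩
    · exact hv1 (toWord_eq_nil_iff.1 h)
    have hred : ∀ q, q ≠ iv a → IsReduced (v.toWord ++ [q]) := by
      intro q hq
      have h1 : IsReduced v.toWord := isReduced_toWord
      rw [h] at h1 ⊢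
      refine List.IsChain.append_overlap h1 ?_ (by simp)
      simp only [List.singleton_append, List.isChain_cons_cons, List.isChain_singleton, and_true]
      rw [ne_iv_iff]
      intro h2
      rw [h2] at hq
      simp at hq
    have hchild : ∀ q, q ≠ iv a → v * mk [q] ∉ K := by
      intro q hq hm
      have h1 := hmax _ hm
      have h2 : (v * mk [q]).toWord = v.toWord ++ [q] := by
        rw [← toWord_mk_red (hred q hq), ← mul_mk, mk_toWord]
      unfold FreeGroup.norm at h1
      rw [h2] at h1
      simp at h1
    have haa : a ≠ iv a := (iv_ne a).symm
    have hmem1 : v * mk [a] ∈ TT (v * mk [a]) := List.prefix_refl _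
    have hmem2 : v * mk [a] ∈ TT v := by
      rw [TT_eq h]
      simp only [Set.mem_ofPred_eq, inv_mul_cancel_left]
      exact Set.disjoint_left.1 (HH_disj haa) (mem_HH_nonempty a)
    have key : ∀ B : Set (FreeGroup α), AI B → Single c.t B →
        (∀ w ∉ K, TT w ⊆ B ∨ TT w ⊆ Bᶜ) → TT (v * mk [a]) ⊆ B → False := by
      intro B hB hs hc ha
      set B1 : Set (FreeGroup α) := {z | v * z ∈ B} with hB1
      have hAI1 : AI B1 := hB.preimage v (MonoidHom.id _) Function.injective_id
      have hs1 : Single c.t B1 := Single.preimage_equiv (A := B) v (MulEquiv.refl _) c.t hs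
      have hsub : ∀ q, q ≠ iv a → ∀ C : Set (FreeGroup α), TT (v * mk [q]) ⊆ C →
          HH q ⊆ {z | v * z ∈ C} := by
        intro q hq C hC z hz
        apply hC
        rw [TT_child (hred q hq)]
        simpa using hz
      have hs2 := c.step hcut hdeg hAI1 hs1 (iv a) (by
        intro q hq
        rcases hc _ (hchild q hq) with h | h
        · exact Or.inl (hsub q hq B h)
        · exact Or.inr (hsub q hq Bᶜ h)) (by
        rw [iv_iv]
        exact hsub a haa B ha)
      have hs3 := Single.preimage_equiv v⁻¹ (MulEquiv.refl _) c.t hs2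
      have hAI3 := (hAI1.union (AI_HH (iv a)).compl).preimage v⁻¹ (MonoidHom.id _)
        Function.injective_id
      have hEq : {x : FreeGroup α | v⁻¹ * (MulEquiv.refl (FreeGroup α)) x ∈ B1 ∪ (HH (iv a))ᶜ} =
          B ∪ TT v := by
        rw [TT_eq h]
        ext x
        simp [hB1]
      have hEq' : {x : FreeGroup α | v⁻¹ * (MonoidHom.id (FreeGroup α)) x ∈ B1 ∪ (HH (iv a))ᶜ} =
          B ∪ TT v := hEq
      rw [hEq] at hs3
      rw [hEq'] at hAI3
      refine ih (K.erase v).card ?_ (K.erase v) rfl (B ∪ TT v) hAI3 hs3 ?_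
      · rw [← hK]
        exact Finset.card_erase_lt_of_mem hvK
      · intro w hw
        by_cases hwv : w = v
        · left
          rw [hwv]
          exact Set.subset_union_right
        · have hwK : w ∉ K := fun h => hw (Finset.mem_erase.2 ⟨hwv, h⟩)
          rcases hc w hwK with h1 | h1
          · left
            exact h1.trans Set.subset_union_left
          · rcases TT_nested v w with h2 | h2 | h2
            · exact absurd (ha hmem1) (h1 (h2 hmem2))
            · left
              exact h2.trans Set.subset_union_right
            · right
              intro x hx hx'
              rcases hx' with hx' | hx'
              · exact h1 hx hx'
              · exact Set.disjoint_left.1 h2 hx' hx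
    rcases hc _ (hchild a haa) with h1 | h1
    · exact key B hB hs hc h1
    · refine key Bᶜ hB.compl (hs.compl hB c.t_ord) ?_ h1
      intro w hw
      rw [compl_compl]
      exact (hc w hw).symm
  · push Not at hv
    refine c.base hcut hdeg hs ?_
    intro q
    have h1 : (mk [q] : FreeGroup α) ∉ K := by
      intro h
      have := congrArg FreeGroup.toWord (hv _ h)
      rw [toWord_mk_red IsReduced.singleton] at this
      simp at this
    have h2 : TT (mk [q]) = HH q := by
      have := TT_child (v := (1 : FreeGroup α)) (q := q) (by simp)
      simpa using this
    rw [← h2]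
    exact hc _ h1

end Cyc

end Contra

section Whitehead

open FreeGroup

variable {α : Type*} [DecidableEq α]

/-- multiplier -/
noncomputable def wE (Z : Set (α × Bool)) (A : FreeGroup α) (q : α × Bool) : FreeGroup α := by
  classical exact if q ∈ Z then A else 1

/-- Whitehead endomorphism -/
noncomputable def wφ (Z : Set (α × Bool)) (a : α) (A : FreeGroup α) : FreeGroup α →* FreeGroup α :=
  FreeGroup.lift fun x => if x = a then of x else
    wE Z A (x, true) * of x * (wE Z A (x, false))⁻¹

lemma wφ_self (Z : Set (α × Bool)) (a : α) (A : FreeGroup α) : wφ Z a A (of a) = of a := by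
  simp [wφ]

lemma wφ_ne (Z : Set (α × Bool)) {a x : α} (A : FreeGroup α) (h : x ≠ a) :
    wφ Z a A (of x) = wE Z A (x, true) * of x * (wE Z A (x, false))⁻¹ := by
  simp [wφ, h]

lemma wφ_E {Z : Set (α × Bool)} {a : α} {A A' : FreeGroup α} (h : wφ Z a A A' = A')
    (q : α × Bool) : wφ Z a A (wE Z A' q) = wE Z A' q := by
  unfold wE
  split_ifs
  · exact h
  · simp

lemma wφ_comp {Z : Set (α × Bool)} {a : α} {A : FreeGroup α} (h : wφ Z a A⁻¹ A = A) :
    (wφ Z a A⁻¹).comp (wφ Z a A) = MonoidHom.id _ := by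
  ext x
  simp only [MonoidHom.comp_apply, MonoidHom.id_apply]
  by_cases hx : x = a
  · subst hx
    rw [wφ_self, wφ_self]
  · have hE : ∀ q, wE Z A⁻¹ q = (wE Z A q)⁻¹ := by
      intro q
      unfold wE
      split_ifs <;> simp
    rw [wφ_ne Z A hx, _root_.map_mul, _root_.map_mul, _root_.map_inv, wφ_E h, wφ_E h, wφ_ne Z _ hx, hE, hE]
    group

lemma wφ_letter (Z : Set (α × Bool)) (a : α × Bool) (A : FreeGroup α) :
    wφ Z a.1 A (mk [a]) = mk [a] := by
  obtain ⟨a, s⟩ := a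
  have h := wφ_self Z a A
  cases s
  · have e : (mk [(a, false)] : FreeGroup α) = (of a)⁻¹ := rfl
    rw [e, _root_.map_inv, h]
  · exact h

/-- Whitehead automorphism -/
noncomputable def wAut (Z : Set (α × Bool)) (a : α × Bool) : FreeGroup α ≃* FreeGroup α :=
  MonoidHom.toMulEquiv (wφ Z a.1 (mk [a])) (wφ Z a.1 (mk [a])⁻¹)
    (wφ_comp (wφ_letter Z a _))
    (by
      have := wφ_comp (Z := Z) (a := a.1) (A := (mk [a])⁻¹)
        (by rw [inv_inv, _root_.map_inv, wφ_letter])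
      rwa [inv_inv] at this)

lemma wAut_letter {Z : Set (α × Bool)} {a : α × Bool} (ha : a ∈ Z) (ha' : iv a ∉ Z)
    (q : α × Bool) : wAut Z a (mk [q]) =
      wE Z (mk [a]) q * (if q.1 = a.1 then 1 else mk [q]) * (wE Z (mk [a]) (iv q))⁻¹ := by
  change wφ Z a.1 (mk [a]) (mk [q]) = _
  by_cases hq : q.1 = a.1
  · rw [if_pos hq]
    rcases (fst_eq_iff q a).1 hq with rfl | rfl
    · rw [wφ_letter]
      simp [wE, ha, ha']
    · rw [mk_iv, _root_.map_inv, wφ_letter]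
      simp [wE, ha, ha']
  · rw [if_neg hq]
    obtain ⟨x, s⟩ := q
    have h := wφ_ne Z (mk [a]) (x := x) (a := a.1) hq
    cases s
    · have e : (mk [(x, false)] : FreeGroup α) = (of x)⁻¹ := rfl
      rw [e, _root_.map_inv, h]
      simp only [iv, Bool.not_false]
      group
    · exact h

lemma Cyc.cut (c : Cyc α) (hmin : ∀ e : FreeGroup α ≃* FreeGroup α, c.t.norm ≤ (e c.t).norm)
    (a : α × Bool) (Z : Set (α × Bool)) (ha : a ∈ Z) (ha' : iv a ∉ Z) : c.deg a ≤ c.cap Z := by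
  set E := wE Z (mk [a]) with hE
  have hcut : ∀ p q, ((E p)⁻¹ * E q).norm ≤ ind (¬ (p ∈ Z ↔ q ∈ Z)) := by
    intro p q
    have : (mk [a] : FreeGroup α).norm ≤ 1 := norm_mk_le
    rw [hE]
    generalize (mk [a] : FreeGroup α) = A at this
    by_cases hp : p ∈ Z <;> by_cases hq : q ∈ Z <;> simp [wE, ind, hp, hq, norm_inv_eq, this]
  have key : ∀ m, ((E (c.x 0))⁻¹ * wAut Z a (c.u m) * E (c.x m)).norm ≤
      ∑ i ∈ Finset.range m, (ind (¬ (c.x i ∈ Z ↔ c.τ i ∈ Z)) + ind ((c.τ i).1 ≠ a.1)) := by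
    intro m
    induction m with
    | zero => simp [Cyc.u_zero]
    | succ m ih =>
      rw [Finset.sum_range_succ, Cyc.u_succ, _root_.map_mul, wAut_letter ha ha', Cyc.x_succ]
      have e : (E (c.x 0))⁻¹ * (wAut Z a (c.u m) * (E (c.τ m) *
          (if (c.τ m).1 = a.1 then 1 else mk [c.τ m]) * (E (iv (c.τ m)))⁻¹)) * E (iv (c.τ m)) =
          ((E (c.x 0))⁻¹ * wAut Z a (c.u m) * E (c.x m)) * (((E (c.x m))⁻¹ * E (c.τ m)) *
          (if (c.τ m).1 = a.1 then 1 else mk [c.τ m])) := by group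
      rw [e]
      refine (FreeGroup.norm_mul_le _ _).trans (add_le_add ih ((FreeGroup.norm_mul_le _ _).trans
        (add_le_add (hcut _ _) ?_)))
      have : (mk [c.τ m] : FreeGroup α).norm ≤ 1 := norm_mk_le
      split_ifs with h
      · simp
      · rwa [ind_pos h]
  have h1 := key c.ℓ
  rw [Cyc.x_per] at h1
  have h2 := hmin ((wAut Z a).trans (MulAut.conj (E (c.x 0))⁻¹))
  have h3 : ((wAut Z a).trans (MulAut.conj (E (c.x 0))⁻¹)) c.t =
      (E (c.x 0))⁻¹ * wAut Z a (c.u c.ℓ) * E (c.x 0) := by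
    simp [Cyc.t]
  rw [h3, Cyc.t, Cyc.norm_u] at h2
  have h4 : c.deg a + ∑ i ∈ Finset.range c.ℓ, ind ((c.τ i).1 ≠ a.1) = c.ℓ := by
    unfold Cyc.deg
    rw [← Finset.sum_add_distrib]
    conv_rhs => rw [← Finset.card_range c.ℓ, Finset.card_eq_sum_ones]
    apply Finset.sum_congr rfl
    intro i _
    by_cases h : (c.τ i).1 = a.1
    · rw [ind_neg (not_not.2 h)]
      rcases (fst_eq_iff _ _).1 h with h | h
      · rw [h, ind_pos rfl, ind_neg (iv_ne a).symm]
      · rw [h, ind_pos rfl, ind_neg (iv_ne a)]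
    · rw [ind_pos h]
      have := (fst_eq_iff (c.τ i) a).not.1 h
      rw [ind_neg (fun h => this (Or.inl h)), ind_neg (fun h => this (Or.inr h))]
  rw [Finset.sum_add_distrib] at h1
  unfold Cyc.cap
  omega

end Whitehead

section Final

open FreeGroup

lemma exists_cyc {α : Type*} (w : List (α × Bool)) (h : IsCyclicallyReduced w) (hw : w ≠ []) :
    ∃ c : Cyc α, c.t = mk w := by
  have hpos : 0 < w.length := List.length_pos_iff.2 hw
  have hlt : ∀ k, k % w.length < w.length := fun k => Nat.mod_lt _ hpos
  refine ⟨⟨fun k => w[k % w.length]'(hlt k), w.length, hpos, ?_, ?_⟩, ?_⟩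
  · intro k
    simp
  · intro k
    rw [← ne_iv_iff]
    rcases Nat.lt_or_ge (k % w.length + 1) w.length with h1 | h1
    · have h2 : (k + 1) % w.length = k % w.length + 1 := by
        rw [Nat.add_mod, Nat.mod_eq_of_lt (a := 1) (by omega), Nat.mod_eq_of_lt h1]
      have h3 := List.isChain_iff_getElem.1 h.1 (k % w.length) h1
      simp only [h2]
      exact h3
    · have h4 : k % w.length = w.length - 1 := by have := hlt k; omega
      have h2 : (k + 1) % w.length = 0 := by
        rw [Nat.add_mod, h4]
        rcases Nat.lt_or_ge 1 w.length with h5 | h5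
        · rw [Nat.mod_eq_of_lt h5, Nat.sub_add_cancel hpos, Nat.mod_self]
        · have : w.length = 1 := by omega
          rw [this, Nat.mod_one]
      simp only [h2, h4]
      refine h.2 _ ?_ _ ?_
      · rw [List.getLast?_eq_getElem?]
        simp
      · rw [List.head?_eq_getElem?]
        simp
  · unfold Cyc.t Cyc.u
    congr 1
    unfold Cyc.W
    apply List.ext_getElem
    · simp
    · intro i h1 h2
      simp [Nat.mod_eq_of_lt h2]

lemma basis_of {α : Type*} {F : Type} [Group F] (e : FreeGroup α ≃* F) (a : α) :
    IsBasisElem (e (of a)) := by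
  have hinj : Function.Injective (fun x => e (of x)) := fun x y h => of_injective (e.injective h)
  refine ⟨Set.range fun x => e (of x), ⟨a, rfl⟩, ?_⟩
  set σ : α ≃ Set.range (fun x => e (of x)) := Equiv.ofInjective _ hinj with hσ
  have h : (FreeGroup.lift (Subtype.val : Set.range (fun x => e (of x)) → F)) =
      ((freeGroupCongr σ).symm.trans e).toMonoidHom := by
    ext s
    obtain ⟨x, rfl⟩ := σ.surjective s
    simp [hσ]
  rw [h]
  exact ((freeGroupCongr σ).symm.trans e).bijective

variable {α : Type*}

lemma lift_fixed (f : α → FreeGroup α) (L : List (α × Bool)) (h : ∀ q ∈ L, f q.1 = of q.1) :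
    FreeGroup.lift f (mk L) = mk L := by
  induction L with
  | nil => exact _root_.map_one _
  | cons q L ih =>
    rw [mk_cons', _root_.map_mul, ih fun p hp => h p (List.mem_cons_of_mem _ hp)]
    congr 1
    have h1 := h q List.mem_cons_self
    obtain ⟨x, s⟩ := q
    simp only at h1
    cases s
    · have e : (mk [(x, false)] : FreeGroup α) = (of x)⁻¹ := rfl
      rw [e, _root_.map_inv, lift_apply_of, h1]
    · have e : (mk [(x, true)] : FreeGroup α) = of x := rfl
      rw [e, lift_apply_of, h1]

lemma lift_letter (f : α → FreeGroup α) (a : α) (s : Bool) :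
    FreeGroup.lift f (mk [(a, s)]) = cond s (f a) (f a)⁻¹ := by
  cases s
  · have e : (mk [(a, false)] : FreeGroup α) = (of a)⁻¹ := rfl
    rw [e, _root_.map_inv, lift_apply_of]; rfl
  · have e : (mk [(a, true)] : FreeGroup α) = of a := rfl
    rw [e, lift_apply_of]; rfl

variable [DecidableEq α]

/-- If a letter occurs exactly once then the word is the image of a generator. -/
lemma exists_aut (a : α) (s : Bool) (U V : List (α × Bool)) (hU : ∀ q ∈ U, q.1 ≠ a)
    (hV : ∀ q ∈ V, q.1 ≠ a) :
    ∃ e : FreeGroup α ≃* FreeGroup α, e (of a) = mk U * mk [(a, s)] * mk V := by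
  set f : α → FreeGroup α := fun x => if x = a then mk U * mk [(a, s)] * mk V else of x with hf
  set y : FreeGroup α := (mk U)⁻¹ * of a * (mk V)⁻¹ with hy
  set f' : α → FreeGroup α := fun x => if x = a then cond s y y⁻¹ else of x with hf'
  have fa : f a = mk U * mk [(a, s)] * mk V := by simp [hf]
  have fa' : f' a = cond s y y⁻¹ := by simp [hf']
  have fn : ∀ x, x ≠ a → f x = of x := fun x hx => by simp [hf, hx]
  have fn' : ∀ x, x ≠ a → f' x = of x := fun x hx => by simp [hf', hx]
  have eU : FreeGroup.lift f (mk U) = mk U := lift_fixed f U fun q hq => fn _ (hU q hq)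
  have eV : FreeGroup.lift f (mk V) = mk V := lift_fixed f V fun q hq => fn _ (hV q hq)
  have eU' : FreeGroup.lift f' (mk U) = mk U := lift_fixed f' U fun q hq => fn' _ (hU q hq)
  have eV' : FreeGroup.lift f' (mk V) = mk V := lift_fixed f' V fun q hq => fn' _ (hV q hq)
  have hya : FreeGroup.lift f y = mk [(a, s)] := by
    rw [hy, _root_.map_mul, _root_.map_mul, _root_.map_inv, _root_.map_inv, eU, eV, lift_apply_of,
      fa]
    generalize (mk U : FreeGroup α) = u
    generalize (mk V : FreeGroup α) = v
    generalize (mk [(a, s)] : FreeGroup α) = z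
    group
  have h1 : (FreeGroup.lift f').comp (FreeGroup.lift f) = MonoidHom.id _ := by
    ext x
    simp only [MonoidHom.comp_apply, MonoidHom.id_apply, lift_apply_of]
    by_cases hx : x = a
    · subst hx
      rw [fa, _root_.map_mul, _root_.map_mul, eU', eV', lift_letter, fa']
      have : cond s (cond s y y⁻¹) (cond s y y⁻¹)⁻¹ = y := by cases s <;> simp
      rw [this, hy]
      generalize (mk U : FreeGroup α) = u
      generalize (mk V : FreeGroup α) = v
      group
    · rw [fn x hx, lift_apply_of, fn' x hx]
  have h2 : (FreeGroup.lift f).comp (FreeGroup.lift f') = MonoidHom.id _ := by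
    ext x
    simp only [MonoidHom.comp_apply, MonoidHom.id_apply, lift_apply_of]
    by_cases hx : x = a
    · subst hx
      rw [fa']
      cases s
      · simp only [cond_false]
        rw [_root_.map_inv, hya]
        have e : (mk [(x, false)] : FreeGroup α) = (of x)⁻¹ := rfl
        rw [e, inv_inv]
      · simp only [cond_true]
        rw [hya]; rfl
    · rw [fn' x hx, lift_apply_of, fn x hx]
  refine ⟨MonoidHom.toMulEquiv _ _ h1 h2, ?_⟩
  change FreeGroup.lift f (of a) = _
  rw [lift_apply_of, fa]

lemma Cyc.deg_one (c : Cyc α) (a : α × Bool) (h : c.deg a = 1) :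
    ∃ e : FreeGroup α ≃* FreeGroup α, e (of a.1) = c.t := by
  have hsum : ∑ i ∈ Finset.range c.ℓ, ind ((c.τ i).1 = a.1) = 1 := by
    rw [← h, Cyc.deg]
    apply Finset.sum_congr rfl
    intro i _
    by_cases h : (c.τ i).1 = a.1
    · rw [ind_pos h]
      rcases (fst_eq_iff _ _).1 h with h | h
      · rw [h, ind_pos rfl, ind_neg (iv_ne a).symm]
      · rw [h, ind_pos rfl, ind_neg (iv_ne a)]
    · rw [ind_neg h]
      have := (fst_eq_iff (c.τ i) a).not.1 h
      rw [ind_neg (fun h => this (Or.inl h)), ind_neg (fun h => this (Or.inr h))]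
  obtain ⟨j, hj, hja⟩ := sum_ind_exists (n := c.ℓ) (p := fun i => (c.τ i).1 = a.1) (by omega)
  have hu : ∀ i < c.ℓ, (c.τ i).1 = a.1 → i = j := by
    intro i hi hia
    by_contra hne
    have := sum_ind_two (p := fun i => (c.τ i).1 = a.1) hi hj hne hia hja
    omega
  have hsplit : c.ℓ = j + (1 + (c.ℓ - j - 1)) := by omega
  obtain ⟨e, he⟩ := exists_aut a.1 (c.τ j).2 (c.W 0 j) (c.W (j + 1) (c.ℓ - j - 1))
    (by
      intro q hq hqa
      simp only [Cyc.W, List.mem_map, List.mem_range'_1] at hq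
      obtain ⟨i, hi, rfl⟩ := hq
      have := hu i (by omega) hqa
      omega)
    (by
      intro q hq hqa
      simp only [Cyc.W, List.mem_map, List.mem_range'_1] at hq
      obtain ⟨i, hi, rfl⟩ := hq
      have := hu i (by omega) hqa
      omega)
  refine ⟨e, ?_⟩
  rw [he, mul_mk, mul_mk, Cyc.t, Cyc.u]
  congr 1
  rw [hsplit, Cyc.W_add, Cyc.W_add, ← hsplit, List.append_assoc, zero_add, ← hja]
  rfl

lemma conj_cyc (t : FreeGroup α) (ht : t ≠ 1) :
    ∃ (c : Cyc α) (g : FreeGroup α), t = g * c.t * g⁻¹ ∧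
      (g = 1 ∨ c.t.norm < t.norm) := by
  have hred : IsReduced t.toWord := isReduced_toWord
  have h1 := reduceCyclically.isCyclicallyReduced hred
  have h2 := reduceCyclically.conj_conjugator_reduceCyclically t.toWord
  have h3 : t = mk (reduceCyclically.conjugator t.toWord) * mk (reduceCyclically t.toWord) *
      (mk (reduceCyclically.conjugator t.toWord))⁻¹ := by
    rw [inv_mk, mul_mk, mul_mk, h2, mk_toWord]
  have h4 : reduceCyclically t.toWord ≠ [] := by
    intro h
    rw [h] at h3
    apply ht
    rw [h3, ← one_eq_mk, mul_one, mul_inv_cancel]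
  obtain ⟨c, hc⟩ := exists_cyc _ h1 h4
  refine ⟨c, _, by rw [hc]; exact h3, ?_⟩
  by_cases h5 : reduceCyclically.conjugator t.toWord = []
  · left
    rw [h5]; rfl
  · right
    have h6 := congrArg List.length h2
    simp only [List.length_append, invRev_length] at h6
    have h7 : 0 < (reduceCyclically.conjugator t.toWord).length := List.length_pos_iff.2 h5
    have h8 : (mk (reduceCyclically t.toWord)).norm ≤ _ := norm_mk_le
    rw [hc]
    change _ < t.toWord.length
    omega

theorem basis_of_single {n : ℕ} {t : FreeGroup (Fin n)} (ht : t ≠ 1) {B : Set (FreeGroup (Fin n))}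
    (hB : AI B) (hs : Single t B) : IsBasisElem t := by
  obtain ⟨e, he⟩ : ∃ e : FreeGroup (Fin n) ≃* FreeGroup (Fin n), ∀ e' : FreeGroup (Fin n) ≃* _,
      (e t).norm ≤ (e' t).norm :=
    ⟨Function.argmin (fun e : FreeGroup (Fin n) ≃* FreeGroup (Fin n) => (e t).norm),
      fun e' => Function.argmin_le (fun e : FreeGroup (Fin n) ≃* FreeGroup (Fin n) => (e t).norm) e'⟩
  have hs1 : e t ≠ 1 := by simpa using ht
  obtain ⟨c, g, hcg, hg⟩ := conj_cyc (e t) hs1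
  have hg1 : g = 1 := by
    rcases hg with h | h
    · exact h
    · exfalso
      have := he (e.trans (MulAut.conj g⁻¹))
      have h2 : (e.trans (MulAut.conj g⁻¹)) t = c.t := by
        change g⁻¹ * e t * g⁻¹⁻¹ = _
        rw [hcg]
        group
      rw [h2] at this
      omega
  have hct : c.t = e t := by rw [hcg, hg1]; simp
  have hmin : ∀ e' : FreeGroup (Fin n) ≃* FreeGroup (Fin n), c.t.norm ≤ (e' c.t).norm := by
    intro e'
    rw [hct]
    exact he (e.trans e')
  by_cases hdeg : ∀ a, c.deg a ≠ 1
  · exfalso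
    have hAI : AI {x : FreeGroup (Fin n) | 1 * e.symm x ∈ B} :=
      hB.preimage 1 e.symm.toMonoidHom e.symm.injective
    have hS : Single c.t {x : FreeGroup (Fin n) | 1 * e.symm x ∈ B} := by
      apply Single.preimage_equiv
      rw [hct]
      simpa using hs
    obtain ⟨K, hK⟩ := hAI.exists_finset
    exact c.contra (c.cut hmin) hdeg _ K rfl _ hAI hS hK
  · push Not at hdeg
    obtain ⟨a, ha⟩ := hdeg
    obtain ⟨e', he'⟩ := c.deg_one a ha
    have : t = (e'.trans e.symm) (of a.1) := by
      simp [he', hct]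
    rw [this]
    exact basis_of _ _

end Final

section Exists

open FreeGroup

lemma exists_cross {G : Type} [Group G] [IsFreeGroup G] {t : G} (ht : t ≠ 1) :
    ∃ A : Set G, AI A ∧ Cross t A 1 := by
  classical
  have h1 : IsFreeGroup.toFreeGroup G t ≠ 1 := by
    intro h
    exact ht ((map_eq_one_iff _ (IsFreeGroup.toFreeGroup G).injective).1 h)
  obtain ⟨c, g, hcg, -⟩ := conj_cyc _ h1
  set f : G ≃* FreeGroup (IsFreeGroup.Generators G) :=
    (IsFreeGroup.toFreeGroup G).trans (MulAut.conj g⁻¹) with hf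
  have hft : f t = c.t := by
    change g⁻¹ * IsFreeGroup.toFreeGroup G t * g⁻¹⁻¹ = _
    rw [hcg]
    group
  refine ⟨{x : G | 1 * f.toMonoidHom x ∈ HH (c.τ 0)},
    (AI_HH _).preimage 1 f.toMonoidHom f.injective, ?_⟩
  rw [Cross_preimage]
  have e1 : f.toMonoidHom t = c.t := hft
  rw [e1, _root_.map_one, mul_one]
  have p := c.EE_pos c.pos
  have q := c.EE_neg 0
  rw [Cyc.u_zero, inv_one] at p q
  intro h
  exact EE_disj (HH_disj (c.x_ne 0)) q (h.1 p)

end Exists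

end Shen

/-- Shenitzer's theorem: if the amalgamated product `F₁ *_⟨t⟩ F₂` of two
finitely generated free groups over an infinite cyclic subgroup (realized as
the quotient of the free product by identifying the nontrivial elements `t₁`
and `t₂`) is a free group, then `t₁` is a basis element of `F₁` or `t₂` is a
basis element of `F₂`. -/
theorem shenitzer (n m : ℕ) (t₁ : FreeGroup (Fin n)) (t₂ : FreeGroup (Fin m))
    (h₁ : t₁ ≠ 1) (h₂ : t₂ ≠ 1)
    (hfree : IsFreeGroup
      ((Monoid.Coprod (FreeGroup (Fin n)) (FreeGroup (Fin m))) ⧸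
        Subgroup.normalClosure
          {Monoid.Coprod.inl t₁ * (Monoid.Coprod.inr t₂)⁻¹})) :
    IsBasisElem t₁ ∨ IsBasisElem t₂ := by
  let P : Bool → Type := fun b => FreeGroup (Fin (cond b n m))
  let t : ∀ b, P b := fun b => match b with
    | true => t₁
    | false => t₂
  have ht : ∀ b, t b ≠ 1 := by
    intro b
    cases b
    · exact h₂
    · exact h₁
  have htf : ∀ b, ¬ IsOfFinOrder (t b) := fun b =>
    not_isOfFinOrder_of_isMulTorsionFree (G := FreeGroup (Fin (cond b n m))) (ht b)
  let N := Subgroup.normalClosure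
    {(Monoid.Coprod.inl t₁ * (Monoid.Coprod.inr t₂)⁻¹ :
      Monoid.Coprod (FreeGroup (Fin n)) (FreeGroup (Fin m)))}
  let f : ∀ b, P b →* (Monoid.Coprod (FreeGroup (Fin n)) (FreeGroup (Fin m))) ⧸ N :=
    fun b => match b with
    | true => (QuotientGroup.mk' N).comp Monoid.Coprod.inl
    | false => (QuotientGroup.mk' N).comp Monoid.Coprod.inr
  have hf : f true (t true) = f false (t false) := by
    change QuotientGroup.mk' N (Monoid.Coprod.inl t₁) = QuotientGroup.mk' N (Monoid.Coprod.inr t₂)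
    refine mul_inv_eq_one.1 ?_
    exact (QuotientGroup.eq_one_iff (N := N)
      (Monoid.Coprod.inl t₁ * (Monoid.Coprod.inr t₂)⁻¹)).2 (Subgroup.subset_normalClosure rfl)
  let φ : ∀ b, Multiplicative ℤ →* P b := fun b => zpowersHom (P b) (t b)
  have hφ : ∀ b k, φ b k = t b ^ k.toAdd := fun b k => rfl
  let θ₀ : Monoid.Coprod (FreeGroup (Fin n)) (FreeGroup (Fin m)) →* Monoid.PushoutI φ :=
    Monoid.Coprod.lift (Monoid.PushoutI.of (φ := φ) true) (Monoid.PushoutI.of (φ := φ) false)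
  have hofb : ∀ b, Monoid.PushoutI.of (φ := φ) b (t b) =
      Monoid.PushoutI.base φ (Multiplicative.ofAdd 1) := by
    intro b
    rw [← Monoid.PushoutI.of_apply_eq_base φ b, hφ]
    simp
  have hθ₀ : N ≤ θ₀.ker := by
    apply Subgroup.normalClosure_le_normal
    rintro _ rfl
    change θ₀ _ = 1
    rw [map_mul, map_inv, mul_inv_eq_one]
    have e1 : θ₀ (Monoid.Coprod.inl t₁) = Monoid.PushoutI.of (φ := φ) true (t true) :=
      Monoid.Coprod.lift_apply_inl _ _ _
    have e2 : θ₀ (Monoid.Coprod.inr t₂) = Monoid.PushoutI.of (φ := φ) false (t false) :=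
      Monoid.Coprod.lift_apply_inr _ _ _
    rw [e1, e2, hofb, hofb]
  let θ : (Monoid.Coprod (FreeGroup (Fin n)) (FreeGroup (Fin m))) ⧸ N →* Monoid.PushoutI φ :=
    QuotientGroup.lift N θ₀ hθ₀
  have hθ : ∀ b x, θ (f b x) = Monoid.PushoutI.of b x := by
    intro b x
    cases b
    · exact Monoid.Coprod.lift_apply_inr (Monoid.PushoutI.of (φ := φ) true)
        (Monoid.PushoutI.of (φ := φ) false) x
    · exact Monoid.Coprod.lift_apply_inl (Monoid.PushoutI.of (φ := φ) true)
        (Monoid.PushoutI.of (φ := φ) false) x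
  have hφinj : ∀ b, Function.Injective (φ b) := by
    intro b
    have := injective_zpow_iff_not_isOfFinOrder.2 (htf b)
    intro x y hxy
    exact Multiplicative.toAdd.injective (this (by simpa [hφ] using hxy))
  have hne : f true (t true) ≠ 1 := by
    intro h
    have h3 := hθ true (t true)
    rw [h, map_one] at h3
    exact ht true (Monoid.PushoutI.of_injective hφinj true (by rw [← h3, map_one]))
  have : IsFreeGroup ((Monoid.Coprod (FreeGroup (Fin n)) (FreeGroup (Fin m))) ⧸ N) := hfree
  obtain ⟨A, hA, hc⟩ := Shen.exists_cross hne
  obtain ⟨b, B, hB, hs⟩ := Shen.exists_leaf t htf f hf φ hφ θ hθ hA 1 hc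
  cases b
  · exact Or.inr (Shen.basis_of_single h₂ hB hs)
  · exact Or.inl (Shen.basis_of_single h₁ hB hs)
end
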